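/- arXiv:2506.18447 — 2 statements merged into one kernel-verified Lean document; each statement's English description precedes it below -/
import Mathlib

section
/- Let Φ = {f_1,…,f_N} be an iterated function system of contracting similarities on ℝ^d with ratios λ_1,…,λ_N ∈ (0,1) satisfying the open set condition, let p = (p_1,…,p_N) be a probability vector with all p_i > 0, let α > 0, and let ℓ : ℕ → ℕ be monotone increasing with liminf_{n→∞} ℓ(n)/log n = 1/α. Then for ℙ_p-almost every ō ∈ Σ, the Hausdorff dimension of the dynamical covering set R(ō,ℓ) equals inf_{q∈[0,1]} P_α(q). -/
/-!
The dimension of `R(ō,ℓ)` is computed by a first-moment covering argument from above and by a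
second-moment argument inside a homogeneous subtree from below. Write
`S(s,q) = Σᵢ λᵢ^s (pᵢ e^α)^q`, which is strictly decreasing in `s` and equals `1` at `s = P q`.

Upper bound (`ae_dimH_le`). Suppose `S(s,q) < 1` for some `q ∈ [0,1]`, and let `a > α` be so close
to `α` that the sum stays below `1` with `a` in place of `α`. Since `ℓ n > (log n) / a` for large
`n`, the limsup set is covered, at every scale, by the cylinders of the words `w` that occur in `ō`
before time `exp (a |w|)`. This event has probability at most
`min (1, 2 e^(a|w|) p_w) ≤ 2 (e^(a|w|) p_w)^q`, so the expected total `s`-dimensional size of these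
words is at most twice a geometric series with ratio less than `1`. Hence the `s`-dimensional
Hausdorff measure is almost surely finite.

Lower bound (`ae_not_covered`). Suppose `S(s,q) > 1` for all `q ∈ [0,1]` and let `0 < r < s`. Words
of length `n` fall into polynomially many types, and a planar convexity argument
(`exists_pos_combination`) combines two of them into a finite family `T` of words of equal length
`L`, with common contraction ratio `ρ` and common probability `P`, that satisfies both
`#T ρ^s ≥ 1` and `#T ρ^s · P e^(γL) > 1` for some `γ < α` (`exists_homog`): the condition at all
`q` becomes the two conditions at the endpoints. For infinitely many `j` the disjoint windows of `ō`
that have the length of the words in `v T^j`, and therefore cylinders contained in those defining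
the limsup set, are numerous enough that, by a second-moment estimate, their empirical distribution on the tree `v T^j` is almost uniform at
every level (`ae_exists_dev_le`). Given a countable family of
cylinders of small total `r`-dimensional size, this yields a window that lies in none of them and
to which the procedure can be applied again (`Good.extend`); in the limit, a point of the limsup set
outside the family is obtained.

The open set condition enters through a volume count (`exists_cut_card_le`): a set of diameter `δ`
meets boundedly many cylinder images of size comparable to `δ`. A cover of the image by sets of
small total size therefore lifts to a family of cylinders of small total size, so
the `r`-dimensional Hausdorff measure of `R(ō,ℓ)` is positive (`hausdorffMeasure_ne_zero`).
-/

open MeasureTheory Filter Topology Set ENNReal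

noncomputable section

/-- The cylinder set in `{1,…,N}^ℕ` determined by a finite word `w` of length `m`. -/
def cylinder {N m : ℕ} (w : Fin m → Fin N) : Set (ℕ → Fin N) :=
  {x | ∀ j : Fin m, x (j : ℕ) = w j}

/-- The product `r_{w 0} ⋯ r_{w (m-1)}` of weights along a finite word `w`. -/
def wordProd {N : ℕ} (r : Fin N → ℝ) {m : ℕ} (w : Fin m → Fin N) : ℝ :=
  ∏ j, r (w j)

/-- The composition `f_{x 0} ∘ f_{x 1} ∘ ⋯ ∘ f_{x (n-1)}` of the maps along
the first `n` symbols of `x`; the coding map is `π x = lim_n prefixMap f x n 0`. -/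
def prefixMap {N : ℕ} {E : Type*} (f : Fin N → E → E) (x : ℕ → Fin N) : ℕ → E → E
  | 0 => id
  | n + 1 => fun y => f (x 0) (prefixMap f (fun k => x (k + 1)) n y)

/-- The symbolic limsup set `⋂ₖ ⋃_{n ≥ k} [(σⁿ ō)|_{ℓ(n)}]`; its image under the
coding map `π` is the dynamical covering set `R(ō, ℓ)`. -/
def limsupCylinders {N : ℕ} (ℓ : ℕ → ℕ) (o : ℕ → Fin N) : Set (ℕ → Fin N) :=
  ⋂ k, ⋃ n, ⋃ _ : k ≤ n, cylinder (fun j : Fin (ℓ n) => o (n + (j : ℕ)))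

/-- `m(n) = ⌊#{k ∈ ℕ : ℓ(k) = n}/n⌋`. -/
def countM (ℓ : ℕ → ℕ) (n : ℕ) : ℕ := Nat.card {k : ℕ | ℓ k = n} / n

/-- The probabilistic pressure
`L(s) = limsup_n (1/n) log Σ_{|ȷ|=n} λ_ȷ^s (1 − (1 − p_ȷ)^{m(n)})`. -/
def pressL {N : ℕ} (lam p : Fin N → ℝ) (m : ℕ → ℕ) (s : ℝ) : ℝ :=
  Filter.limsup (fun n : ℕ => Real.log (∑ w : Fin n → Fin N,
    wordProd lam w ^ s * (1 - (1 - wordProd p w) ^ m n)) / (n : ℝ)) atTop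

namespace DynCover

/-! ### Finite words -/

variable {N : ℕ}

/-- The word formed by the first `n` symbols of `x`. -/
def pre (x : ℕ → Fin N) (n : ℕ) : List (Fin N) := (List.range n).map x

/-- The `n`-th iterate of the left shift. -/
def sh (n : ℕ) (x : ℕ → Fin N) : ℕ → Fin N := fun k => x (n + k)

/-- The product of the weights `r` along a finite word. -/
def wt (r : Fin N → ℝ) (w : List (Fin N)) : ℝ := (w.map r).prod

@[simp] lemma length_pre (x : ℕ → Fin N) (n : ℕ) : (pre x n).length = n := by simp [pre]

@[simp] lemma pre_zero (x : ℕ → Fin N) : pre x 0 = [] := by simp [pre]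

lemma pre_add (x : ℕ → Fin N) (a b : ℕ) : pre x (a + b) = pre x a ++ pre (sh a x) b := by
  simp [pre, sh, List.range_add, Function.comp_def]

lemma pre_prefix (x : ℕ → Fin N) {a b : ℕ} (h : a ≤ b) : pre x a <+: pre x b := by
  obtain ⟨c, rfl⟩ := Nat.exists_eq_add_of_le h
  exact ⟨_, (pre_add x a c).symm⟩

lemma pre_eq_iff {x y : ℕ → Fin N} {n : ℕ} : pre x n = pre y n ↔ ∀ j < n, x j = y j := by
  simp [pre]

lemma eq_pre_of_prefix {x : ℕ → Fin N} {n : ℕ} {w : List (Fin N)} (h : w <+: pre x n) :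
    w = pre x w.length := by
  have hl : w.length ≤ n := by simpa using h.length_le
  exact (List.prefix_of_prefix_length_le h (pre_prefix x hl) (by simp)).eq_of_length (by simp)

lemma mem_cylinder_iff {x y : ℕ → Fin N} {n m : ℕ} :
    x ∈ _root_.cylinder (fun j : Fin m => y (n + (j : ℕ))) ↔ pre x m = pre (sh n y) m := by
  rw [pre_eq_iff]
  simp only [_root_.cylinder, mem_ofPred_eq, sh]
  exact ⟨fun h j hj => h ⟨j, hj⟩, fun h j => h j j.2⟩

lemma mem_limsup_iff {ℓ : ℕ → ℕ} {x o : ℕ → Fin N} :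
    x ∈ limsupCylinders ℓ o ↔ ∀ k, ∃ n, k ≤ n ∧ pre x (ℓ n) = pre (sh n o) (ℓ n) := by
  simp only [limsupCylinders, mem_iInter, mem_iUnion, mem_cylinder_iff, exists_prop]

@[simp] lemma wt_nil (r : Fin N → ℝ) : wt r [] = 1 := by simp [wt]

lemma wt_append (r : Fin N → ℝ) (u w : List (Fin N)) : wt r (u ++ w) = wt r u * wt r w := by
  simp [wt]

lemma wt_cons (r : Fin N → ℝ) (i : Fin N) (w : List (Fin N)) : wt r (i :: w) = r i * wt r w := by
  simp [wt]

lemma wt_pos {r : Fin N → ℝ} (hr : ∀ i, 0 < r i) (w : List (Fin N)) : 0 < wt r w := by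
  induction w with
  | nil => simp
  | cons i w ih => rw [wt_cons]; exact mul_pos (hr i) ih

lemma wt_le_pow {r : Fin N → ℝ} (hr : ∀ i, 0 < r i) {b : ℝ} (hb : ∀ i, r i ≤ b)
    (w : List (Fin N)) : wt r w ≤ b ^ w.length := by
  induction w with
  | nil => simp
  | cons i w ih =>
    rw [wt_cons, List.length_cons, pow_succ']
    exact mul_le_mul (hb i) ih (wt_pos hr w).le ((hr i).le.trans (hb i))

lemma pow_le_wt {r : Fin N → ℝ} {b : ℝ} (hb0 : 0 ≤ b) (hb : ∀ i, b ≤ r i)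
    (w : List (Fin N)) : b ^ w.length ≤ wt r w := by
  induction w with
  | nil => simp
  | cons i w ih =>
    rw [wt_cons, List.length_cons, pow_succ']
    exact mul_le_mul (hb i) ih (by positivity) (hb0.trans (hb i))

lemma wt_pre_succ (r : Fin N → ℝ) (x : ℕ → Fin N) (n : ℕ) :
    wt r (pre x (n + 1)) = wt r (pre x n) * r (x n) := by
  simp [pre, List.range_succ, wt]

lemma wordProd_eq (r : Fin N → ℝ) {m : ℕ} (w : Fin m → Fin N) :
    wordProd r w = wt r (List.ofFn w) := by
  simp [wordProd, wt, List.map_ofFn, List.prod_ofFn]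

/-! ### Homogeneous families of words -/

/-- All concatenations `u ++ w` with `u ∈ S` and `w ∈ T`. -/
def catF (S T : Finset (List (Fin N))) : Finset (List (Fin N)) :=
  Finset.image₂ (fun u w => u ++ w) S T

lemma mem_catF {S T : Finset (List (Fin N))} {w : List (Fin N)} :
    w ∈ catF S T ↔ ∃ u ∈ S, ∃ v ∈ T, u ++ v = w := by
  simp [catF, Finset.mem_image₂]

/-- All concatenations of `j` words of `T`. -/
def TP (T : Finset (List (Fin N))) : ℕ → Finset (List (Fin N))
  | 0 => {[]}
  | j + 1 => catF T (TP T j)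

lemma TP_add (T : Finset (List (Fin N))) (i j : ℕ) : TP T (i + j) = catF (TP T i) (TP T j) := by
  induction i with
  | zero => simp [TP, catF]
  | succ i ih =>
    rw [Nat.succ_add, TP, ih, TP]
    ext w
    simp only [mem_catF]
    constructor
    · rintro ⟨a, ha, _, ⟨b, hb, c, hc, rfl⟩, rfl⟩
      exact ⟨a ++ b, ⟨a, ha, b, hb, rfl⟩, c, hc, by simp⟩
    · rintro ⟨_, ⟨a, ha, b, hb, rfl⟩, c, hc, rfl⟩
      exact ⟨a, ha, b ++ c, ⟨b, hb, c, hc, rfl⟩, by simp⟩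

/-- A family of words of the same length `L`, all having the same products `ρ` and `P` of the
weights `lam` and `p`. -/
structure Homog (lam p : Fin N → ℝ) (T : Finset (List (Fin N))) (L : ℕ) (ρ P : ℝ) : Prop where
  len : ∀ w ∈ T, w.length = L
  lam_eq : ∀ w ∈ T, wt lam w = ρ
  p_eq : ∀ w ∈ T, wt p w = P

lemma Homog.cat {lam p : Fin N → ℝ} {S T : Finset (List (Fin N))} {L L' : ℕ} {ρ ρ' P P' : ℝ}
    (hS : Homog lam p S L ρ P) (hT : Homog lam p T L' ρ' P') :
    Homog lam p (catF S T) (L + L') (ρ * ρ') (P * P') := by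
  constructor <;> intro w hw <;> obtain ⟨u, hu, v, hv, rfl⟩ := mem_catF.1 hw
  · rw [List.length_append, hS.len u hu, hT.len v hv]
  · rw [wt_append, hS.lam_eq u hu, hT.lam_eq v hv]
  · rw [wt_append, hS.p_eq u hu, hT.p_eq v hv]

lemma card_catF {S T : Finset (List (Fin N))} {L : ℕ} (hS : ∀ w ∈ S, w.length = L) :
    (catF S T).card = S.card * T.card := by
  rw [catF, ← Finset.image_uncurry_product, Finset.card_image_of_injOn, Finset.card_product]
  rintro ⟨a, b⟩ hab ⟨c, e⟩ hce h
  simp only [Finset.coe_product, mem_prod, Finset.mem_coe] at hab hce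
  simp only [Function.uncurry] at h
  have := List.append_inj h (by rw [hS a hab.1, hS c hce.1])
  rw [this.1, this.2]

lemma Homog.TP {lam p : Fin N → ℝ} {T : Finset (List (Fin N))} {L : ℕ} {ρ P : ℝ}
    (hT : Homog lam p T L ρ P) (j : ℕ) :
    Homog lam p (TP T j) (j * L) (ρ ^ j) (P ^ j) := by
  induction j with
  | zero => constructor <;> simp [DynCover.TP]
  | succ j ih =>
    have := hT.cat ih
    rw [DynCover.TP, pow_succ', pow_succ', Nat.succ_mul, Nat.add_comm]
    exact this

lemma card_TP {T : Finset (List (Fin N))} {L : ℕ} (hT : ∀ w ∈ T, w.length = L) (j : ℕ) :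
    (TP T j).card = T.card ^ j := by
  induction j with
  | zero => simp [TP]
  | succ j ih => rw [TP, card_catF hT, ih, pow_succ']

end DynCover

namespace DynCover

/-! ### Independence of disjoint windows -/

variable {N : ℕ}

/-- The law of one symbol, as a measure on the alphabet. -/
def symLaw (p : Fin N → ℝ) : Measure (Fin N) := ∑ i, ENNReal.ofReal (p i) • Measure.dirac i

lemma symLaw_apply (p : Fin N → ℝ) (t : Set (Fin N)) [DecidablePred (· ∈ t)] :
    symLaw p t = ∑ i with i ∈ t, ENNReal.ofReal (p i) := by
  simp [symLaw, Finset.sum_filter, Set.indicator_apply]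

lemma symLaw_singleton (p : Fin N → ℝ) (i : Fin N) : symLaw p {i} = ENNReal.ofReal (p i) := by
  classical
  rw [symLaw_apply]
  simp [Finset.sum_filter]

lemma isProbabilityMeasure_symLaw {p : Fin N → ℝ} (hp : ∀ i, 0 < p i) (hpsum : ∑ i, p i = 1) :
    IsProbabilityMeasure (symLaw p) := by
  classical
  constructor
  rw [symLaw_apply]
  simp only [mem_univ, Finset.filter_true]
  rw [← ENNReal.ofReal_sum_of_nonneg (fun i _ => (hp i).le), hpsum, ENNReal.ofReal_one]

lemma measurableSet_cylinder {m : ℕ} (w : Fin m → Fin N) : MeasurableSet (_root_.cylinder w) := by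
  have : _root_.cylinder w = ⋂ j : Fin m, (fun x : ℕ → Fin N => x j) ⁻¹' {w j} := by
    ext x; simp [_root_.cylinder]
  rw [this]
  exact MeasurableSet.iInter fun j => measurable_pi_apply _ (MeasurableSet.singleton _)

/-- A measure giving every cylinder its Bernoulli mass is the infinite product measure. -/
lemma eq_infinitePi_symLaw {p : Fin N → ℝ} (hp : ∀ i, 0 < p i) (hpsum : ∑ i, p i = 1)
    {μ : Measure (ℕ → Fin N)}
    (hμ : ∀ (m : ℕ) (w : Fin m → Fin N),
      μ (_root_.cylinder w) = ENNReal.ofReal (wordProd p w)) :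
    haveI := isProbabilityMeasure_symLaw hp hpsum
    μ = Measure.infinitePi (fun _ : ℕ => symLaw p) := by
  classical
  have := isProbabilityMeasure_symLaw hp hpsum
  refine Measure.eq_infinitePi _ fun s t _ => ?_
  obtain ⟨n, hn⟩ : ∃ n, s ⊆ Finset.range n := s.exists_nat_subset_range
  let t' : ℕ → Set (Fin N) := fun i => if i ∈ s then t i else univ
  let W : Finset (Fin n → Fin N) :=
    Fintype.piFinset fun j : Fin n => Finset.univ.filter fun i => i ∈ t' j
  have hset : Set.pi s t = ⋃ w ∈ W, _root_.cylinder w := by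
    ext x
    simp only [Set.mem_pi, mem_iUnion, W, Fintype.mem_piFinset, Finset.mem_filter,
      Finset.mem_univ, true_and, exists_prop, _root_.cylinder, mem_ofPred_eq, t']
    constructor
    · intro h
      refine ⟨fun j => x j, fun j => ?_, fun j => rfl⟩
      split_ifs with hj
      · exact h _ hj
      · trivial
    · rintro ⟨w, hw, hx⟩ i hi
      have hin : i < n := Finset.mem_range.1 (hn hi)
      have h1 := hw ⟨i, hin⟩
      have h2 := hx ⟨i, hin⟩
      simp only at h1 h2
      rw [if_pos (by simpa using hi)] at h1
      rw [h2]; exact h1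
  rw [hset, measure_biUnion_finset]
  · have h1 : ∀ w ∈ W, μ (_root_.cylinder w) = ∏ j, ENNReal.ofReal (p (w j)) := fun w _ => by
      rw [hμ, wordProd, ENNReal.ofReal_prod_of_nonneg fun j _ => (hp _).le]
    rw [Finset.sum_congr rfl h1,
      ← Finset.prod_univ_sum (fun j : Fin n => Finset.univ.filter fun i => i ∈ t' j)
        (fun _ i => ENNReal.ofReal (p i))]
    have h2 : ∀ j : Fin n, (∑ i with i ∈ t' j, ENNReal.ofReal (p i)) = symLaw p (t' j) :=
      fun j => (symLaw_apply p (t' j)).symm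
    rw [Finset.prod_congr rfl fun j _ => h2 j, ← Finset.prod_range (fun j => symLaw p (t' j)),
      ← Finset.prod_subset hn]
    · exact Finset.prod_congr rfl fun i hi => by simp [t', hi]
    · intro i _ hi
      simp [t', hi]
  · intro w _ w' _ hne
    rw [Function.onFun, Set.disjoint_left]
    intro x hx hx'
    exact hne (funext fun j => (hx j).symm.trans (hx' j))
  · exact fun w _ => measurableSet_cylinder w

lemma exists_pre_eq [NeZero N] (w : List (Fin N)) : ∃ y : ℕ → Fin N, pre y w.length = w := by
  refine ⟨fun j => w.getD j 0, ?_⟩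
  apply List.ext_getElem
  · simp
  · intro i h1 h2
    simp [pre, h2]

lemma measurable_pre_sh (n m : ℕ) : ∀ w : List (Fin N),
    MeasurableSet {o : ℕ → Fin N | pre (sh n o) m = w} := by
  intro w
  by_cases h : ∃ x : ℕ → Fin N, pre x m = w
  · obtain ⟨x, rfl⟩ := h
    simp only [pre_eq_iff, sh]
    have : {o : ℕ → Fin N | ∀ j < m, o (n + j) = x j}
        = ⋂ j, ⋂ _ : j < m, (fun o : ℕ → Fin N => o (n + j)) ⁻¹' {x j} := by
      ext; simp
    rw [this]
    exact MeasurableSet.iInter fun j => MeasurableSet.iInter fun _ =>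
      measurable_pi_apply _ (MeasurableSet.singleton _)
  · have : {o : ℕ → Fin N | pre (sh n o) m = w} = ∅ := by
      ext o; simp only [mem_ofPred_eq, mem_empty_iff_false, iff_false]
      exact fun h' => h ⟨_, h'⟩
    rw [this]; exact MeasurableSet.empty

lemma wt_pre (r : Fin N → ℝ) (x : ℕ → Fin N) (n : ℕ) :
    wt r (pre x n) = ∏ j ∈ Finset.range n, r (x j) := by
  induction n with
  | zero => simp
  | succ n ih => rw [wt_pre_succ, Finset.prod_range_succ, ih]

lemma measure_window [NeZero N] {p : Fin N → ℝ} (hp : ∀ i, 0 < p i) (hpsum : ∑ i, p i = 1)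
    {μ : Measure (ℕ → Fin N)}
    (hμ : ∀ (m : ℕ) (w : Fin m → Fin N),
      μ (_root_.cylinder w) = ENNReal.ofReal (wordProd p w))
    (n : ℕ) (w : List (Fin N)) :
    μ {o | pre (sh n o) w.length = w} = ENNReal.ofReal (wt p w) := by
  have := isProbabilityMeasure_symLaw hp hpsum
  obtain ⟨y, hy⟩ := exists_pre_eq w
  set m := w.length
  rw [← hy, eq_infinitePi_symLaw hp hpsum hμ]
  have : {o : ℕ → Fin N | pre (sh n o) m = pre y m}
      = Set.pi (Finset.Ico n (n + m)) (fun i => {y (i - n)}) := by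
    ext o
    simp only [pre_eq_iff, sh, mem_ofPred_eq, Set.mem_pi, Finset.coe_Ico, mem_Ico,
      mem_singleton_iff]
    constructor
    · rintro h i ⟨h1, h2⟩
      have := h (i - n) (by omega)
      rwa [Nat.add_sub_cancel' h1] at this
    · intro h j hj
      have := h (n + j) ⟨by omega, by omega⟩
      rwa [Nat.add_sub_cancel_left] at this
  rw [this, Measure.infinitePi_pi _ (fun i _ => MeasurableSet.singleton _), wt_pre,
    ENNReal.ofReal_prod_of_nonneg fun j _ => (hp _).le, Finset.prod_Ico_eq_prod_range]
  simp [symLaw_singleton]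

/-- Indicator of the event that the `i`-th window of length `m` is a word of `G`. -/
def hit (m : ℕ) (G : Finset (List (Fin N))) (i : ℕ) (o : ℕ → Fin N) : ℝ :=
  if pre (sh (i * m) o) m ∈ G then 1 else 0

/-- The number of indices `i ∈ I` for which the `i`-th window of length `m` is a word of `G`. -/
def cnt (m : ℕ) (I : Finset ℕ) (G : Finset (List (Fin N))) (o : ℕ → Fin N) : ℝ :=
  ∑ i ∈ I, hit m G i o

lemma measurable_hit (m : ℕ) (G : Finset (List (Fin N))) (i : ℕ) : Measurable (hit m G i) := by
  refine Measurable.ite ?_ measurable_const measurable_const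
  have : {o : ℕ → Fin N | pre (sh (i * m) o) m ∈ G}
      = ⋃ w ∈ G, {o | pre (sh (i * m) o) m = w} := by ext; simp
  rw [this]
  exact Finset.measurableSet_biUnion _ fun w _ => measurable_pre_sh _ _ w

lemma memLp_hit {μ : Measure (ℕ → Fin N)} [IsProbabilityMeasure μ]
    (m : ℕ) (G : Finset (List (Fin N))) (i : ℕ) : MemLp (hit m G i) 2 μ := by
  refine MemLp.of_bound (measurable_hit m G i).aestronglyMeasurable 1 ?_
  refine Eventually.of_forall fun o => ?_
  unfold hit; split_ifs <;> simp

lemma integral_hit [NeZero N] {p : Fin N → ℝ} (hp : ∀ i, 0 < p i) (hpsum : ∑ i, p i = 1)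
    {μ : Measure (ℕ → Fin N)} [IsProbabilityMeasure μ]
    (hμ : ∀ (m : ℕ) (w : Fin m → Fin N),
      μ (_root_.cylinder w) = ENNReal.ofReal (wordProd p w))
    {m : ℕ} {G : Finset (List (Fin N))} (hG : ∀ w ∈ G, w.length = m) (i : ℕ) :
    ∫ o, hit m G i o ∂μ = ∑ w ∈ G, wt p w := by
  have h1 : ∀ o, hit m G i o
      = ∑ w ∈ G, Set.indicator {o | pre (sh (i * m) o) m = w} (fun _ => (1 : ℝ)) o := by
    intro o
    simp [hit, Set.indicator_apply]
  simp_rw [h1]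
  rw [integral_finsetSum _ fun w _ =>
    (integrable_const (1 : ℝ)).indicator (measurable_pre_sh _ _ w)]
  refine Finset.sum_congr rfl fun w hw => ?_
  rw [integral_indicator_const _ (measurable_pre_sh _ _ w), ← hG w hw, Measure.real,
    measure_window hp hpsum hμ, ENNReal.toReal_ofReal (wt_pos hp w).le]
  simp

lemma indep_hit {p : Fin N → ℝ} (hp : ∀ i, 0 < p i) (hpsum : ∑ i, p i = 1)
    {μ : Measure (ℕ → Fin N)}
    (hμ : ∀ (m : ℕ) (w : Fin m → Fin N),
      μ (_root_.cylinder w) = ENNReal.ofReal (wordProd p w))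
    (m : ℕ) (G : Finset (List (Fin N))) {i i' : ℕ} (hne : i ≠ i') :
    ProbabilityTheory.IndepFun (hit m G i) (hit m G i') μ := by
  classical
  have := isProbabilityMeasure_symLaw hp hpsum
  have hI : ProbabilityTheory.iIndepFun (fun (n : ℕ) (o : ℕ → Fin N) => o n) μ := by
    rw [eq_infinitePi_symLaw hp hpsum hμ]
    exact ProbabilityTheory.iIndepFun_infinitePi (X := fun _ a => a) fun _ => measurable_id
  have hdisj : Disjoint (Finset.Ico (i * m) (i * m + m)) (Finset.Ico (i' * m) (i' * m + m)) := by
    rw [Finset.disjoint_left]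
    intro a ha ha'
    rw [Finset.mem_Ico] at ha ha'
    rcases lt_or_gt_of_ne hne with h | h
    · nlinarith [Nat.mul_le_mul_right m (Nat.succ_le_of_lt h)]
    · nlinarith [Nat.mul_le_mul_right m (Nat.succ_le_of_lt h)]
  have h := hI.indepFun_finset _ _ hdisj fun n => measurable_pi_apply n
  -- the window starting at `k` is a function of the coordinates in `[k, k + m)`
  let F : ∀ k : ℕ, ((Finset.Ico k (k + m) : Finset ℕ) → Fin N) → ℝ := fun k z =>
    if (List.range m).attach.map (fun j => z ⟨k + j.1, by
      have := List.mem_range.1 j.2; rw [Finset.mem_Ico]; omega⟩) ∈ G then 1 else 0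
  have hF : ∀ k, hit m G k = F (k * m) ∘ fun o (n : (Finset.Ico (k * m) (k * m + m) : Finset ℕ))
      => o n := by
    intro k
    funext o
    have : (List.range m).attach.map (fun j => o (k * m + j.1)) = pre (sh (k * m) o) m :=
      List.attach_map_val (f := fun j => o (k * m + j))
    simp only [hit, F, Function.comp]
    rw [this]
  rw [hF i, hF i']
  exact h.comp (measurable_of_countable _) (measurable_of_countable _)

/-- The count of successful windows deviates from its mean, in mean square, by at most its mean:
distinct windows are independent. -/
lemma integral_cnt_sq [NeZero N] {p : Fin N → ℝ} (hp : ∀ i, 0 < p i) (hpsum : ∑ i, p i = 1)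
    {μ : Measure (ℕ → Fin N)} [IsProbabilityMeasure μ]
    (hμ : ∀ (m : ℕ) (w : Fin m → Fin N),
      μ (_root_.cylinder w) = ENNReal.ofReal (wordProd p w))
    {m : ℕ} {G : Finset (List (Fin N))} (hG : ∀ w ∈ G, w.length = m) (I : Finset ℕ) :
    Integrable (fun o => (cnt m I G o - I.card * ∑ w ∈ G, wt p w) ^ 2) μ ∧
    ∫ o, (cnt m I G o - I.card * ∑ w ∈ G, wt p w) ^ 2 ∂μ ≤ I.card * ∑ w ∈ G, wt p w := by
  have hL : MemLp (cnt m I G) 2 μ := memLp_finsetSum _ fun i _ => memLp_hit m G i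
  have hmean : ∫ o, cnt m I G o ∂μ = I.card * ∑ w ∈ G, wt p w := by
    unfold cnt
    rw [integral_finsetSum _ fun i _ => (memLp_hit m G i).integrable one_le_two]
    simp [integral_hit hp hpsum hμ hG]
  constructor
  · exact (hL.sub (memLp_const _)).integrable_sq
  · rw [← hmean, ← ProbabilityTheory.variance_eq_integral hL.1.aemeasurable]
    have hc : cnt m I G = ∑ i ∈ I, hit m G i := by
      funext o; simp [cnt]
    rw [hc, ProbabilityTheory.IndepFun.variance_sum (fun i _ => memLp_hit m G i)
      fun i _ j _ hij => indep_hit hp hpsum hμ m G hij]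
    rw [← hc, hmean, ← nsmul_eq_mul, ← Finset.sum_const]
    refine Finset.sum_le_sum fun i _ => ?_
    refine (ProbabilityTheory.variance_le_expectation_sq
      (measurable_hit m G i).aestronglyMeasurable).trans ?_
    rw [← integral_hit hp hpsum hμ hG i]
    refine le_of_eq (integral_congr_ae (Eventually.of_forall fun o => ?_))
    simp only [Pi.pow_apply, hit]
    split_ifs <;> simp

end DynCover

namespace DynCover

/-! ### The mean square deviation of the empirical mass -/

variable {N : ℕ}

/-- The weighted mean square deviation, over all levels `l ≤ j` and all `u ∈ T^l`, of the
normalised number `κ * cnt` of windows in `v u T^(j-l)` from its expected value `|T|^(-l)`.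
The weight at level `l` is `a^(-l)`; here `a` stands for the `s`-th power of the common ratio
of the words in `T`. -/
def dev (T : Finset (List (Fin N))) (a κ : ℝ) (v : List (Fin N)) (m j : ℕ) (I : Finset ℕ)
    (o : ℕ → Fin N) : ℝ :=
  ∑ l ∈ Finset.range (j + 1), a⁻¹ ^ l * ∑ u ∈ TP T l,
    (κ * cnt m I (catF {v ++ u} (TP T (j - l))) o - (T.card : ℝ)⁻¹ ^ l) ^ 2

lemma dev_nonneg (T : Finset (List (Fin N))) {a : ℝ} (ha : 0 < a) (κ : ℝ) (v : List (Fin N))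
    (m j : ℕ) (I : Finset ℕ) (o : ℕ → Fin N) : 0 ≤ dev T a κ v m j I o :=
  Finset.sum_nonneg fun _ _ => mul_nonneg (by positivity)
    (Finset.sum_nonneg fun _ _ => sq_nonneg _)

/-- The mean of `dev` is small once `κ` is: windows are independent, so the variance of each count
is at most its mean. -/
lemma integral_dev [NeZero N] {lam p : Fin N → ℝ} (hp : ∀ i, 0 < p i) (hpsum : ∑ i, p i = 1)
    {μ : Measure (ℕ → Fin N)} [IsProbabilityMeasure μ]
    (hμ : ∀ (m : ℕ) (w : Fin m → Fin N),
      μ (_root_.cylinder w) = ENNReal.ofReal (wordProd p w))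
    {T : Finset (List (Fin N))} {L : ℕ} {ρ P : ℝ} (hT : Homog lam p T L ρ P)
    (hTne : T.Nonempty) {a : ℝ} (ha : 0 < a) (ha1 : a ≤ 1) (v : List (Fin N)) (j : ℕ)
    (I : Finset ℕ) (hI : I.Nonempty) {κ : ℝ}
    (hκ : κ = ((T.card : ℝ) ^ j * (I.card * (wt p v * P ^ j)))⁻¹) :
    Integrable (dev T a κ v (v.length + j * L) j I) μ ∧
      ∫ o, dev T a κ v (v.length + j * L) j I o ∂μ ≤ (j + 1) * a⁻¹ ^ j * κ := by
  have hc : 0 < (T.card : ℝ) := by exact_mod_cast hTne.card_pos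
  have hM : 0 < (I.card : ℝ) := by exact_mod_cast hI.card_pos
  have hP : 0 < P := by
    obtain ⟨w, hw⟩ := hTne
    rw [← hT.p_eq w hw]; exact wt_pos hp w
  have hpv := wt_pos hp v
  have hκ0 : 0 < κ := by rw [hκ]; positivity
  set m := v.length + j * L with hm
  have key : ∀ l ∈ Finset.range (j + 1), ∀ u ∈ TP T l,
      Integrable (fun o => (κ * cnt m I (catF {v ++ u} (TP T (j - l))) o
        - (T.card : ℝ)⁻¹ ^ l) ^ 2) μ ∧
      ∫ o, (κ * cnt m I (catF {v ++ u} (TP T (j - l))) o - (T.card : ℝ)⁻¹ ^ l) ^ 2 ∂μ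
        ≤ κ * (T.card : ℝ)⁻¹ ^ l := by
    intro l hl u hu
    have hlj : l ≤ j := Nat.lt_succ_iff.1 (Finset.mem_range.1 hl)
    obtain ⟨k, rfl⟩ := Nat.exists_eq_add_of_le hlj
    have hk : l + k - l = k := by omega
    rw [hk]
    set G := catF {v ++ u} (TP T k) with hG
    have hGlen : ∀ w ∈ G, w.length = m := by
      intro w hw
      obtain ⟨x, hx, y, hy, rfl⟩ := mem_catF.1 hw
      rw [Finset.mem_singleton] at hx
      subst hx
      rw [List.length_append, List.length_append, (hT.TP l).len u hu, (hT.TP k).len y hy, hm]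
      ring
    have hGp : ∑ w ∈ G, wt p w = (T.card : ℝ) ^ k * (wt p v * P ^ (l + k)) := by
      have h1 : ∀ w ∈ G, wt p w = wt p v * P ^ (l + k) := by
        intro w hw
        obtain ⟨x, hx, y, hy, rfl⟩ := mem_catF.1 hw
        rw [Finset.mem_singleton] at hx
        subst hx
        rw [wt_append, wt_append, (hT.TP l).p_eq u hu, (hT.TP k).p_eq y hy, pow_add]
        ring
      rw [Finset.sum_congr rfl h1, Finset.sum_const, nsmul_eq_mul, hG,
        card_catF (L := (v ++ u).length) (by simp), card_TP hT.len]
      simp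
    obtain ⟨hi, hb⟩ := integral_cnt_sq hp hpsum hμ hGlen I
    set g := ∑ w ∈ G, wt p w with hg
    have hκg : κ * (I.card * g) = (T.card : ℝ)⁻¹ ^ l := by
      rw [hκ, hGp, pow_add (T.card : ℝ), inv_pow]
      field_simp
    have hrew : ∀ o, (κ * cnt m I G o - (T.card : ℝ)⁻¹ ^ l) ^ 2
        = κ ^ 2 * (cnt m I G o - I.card * g) ^ 2 := by
      intro o; rw [← hκg]; ring
    simp_rw [hrew]
    refine ⟨hi.const_mul _, ?_⟩
    rw [integral_const_mul, ← hκg]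
    calc κ ^ 2 * ∫ o, (cnt m I G o - I.card * g) ^ 2 ∂μ ≤ κ ^ 2 * (I.card * g) := by gcongr
      _ = κ * (κ * (I.card * g)) := by ring
  have hintegrable : ∀ l ∈ Finset.range (j + 1), Integrable (fun o => a⁻¹ ^ l * ∑ u ∈ TP T l,
      (κ * cnt m I (catF {v ++ u} (TP T (j - l))) o - (T.card : ℝ)⁻¹ ^ l) ^ 2) μ :=
    fun l hl => (integrable_finsetSum _ fun u hu => (key l hl u hu).1).const_mul _
  refine ⟨integrable_finsetSum _ hintegrable, ?_⟩
  unfold dev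
  rw [integral_finsetSum _ hintegrable]
  have hterm : ∀ l ∈ Finset.range (j + 1), ∫ o, a⁻¹ ^ l * ∑ u ∈ TP T l,
      (κ * cnt m I (catF {v ++ u} (TP T (j - l))) o - (T.card : ℝ)⁻¹ ^ l) ^ 2 ∂μ
      ≤ a⁻¹ ^ j * κ := by
    intro l hl
    rw [integral_const_mul, integral_finsetSum _ fun u hu => (key l hl u hu).1]
    have h1 : ∑ u ∈ TP T l, ∫ o, (κ * cnt m I (catF {v ++ u} (TP T (j - l))) o
        - (T.card : ℝ)⁻¹ ^ l) ^ 2 ∂μ ≤ κ := by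
      refine (Finset.sum_le_sum fun u hu => (key l hl u hu).2).trans (le_of_eq ?_)
      rw [Finset.sum_const, card_TP hT.len, nsmul_eq_mul]
      push_cast
      rw [inv_pow]
      field_simp
    have h2 : a⁻¹ ^ l ≤ a⁻¹ ^ j :=
      pow_le_pow_right₀ ((one_le_inv₀ ha).2 ha1) (Nat.lt_succ_iff.1 (Finset.mem_range.1 hl))
    exact mul_le_mul h2 h1 (Finset.sum_nonneg fun u _ => integral_nonneg fun o => sq_nonneg _)
      (by positivity)
  refine (Finset.sum_le_sum hterm).trans (le_of_eq ?_)
  rw [Finset.sum_const, Finset.card_range, nsmul_eq_mul]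
  push_cast
  ring

lemma tendsto_poly_mul_pow (A B : ℝ) {r : ℝ} (hr0 : 0 ≤ r) (hr1 : r < 1) :
    Tendsto (fun j : ℕ => (j + 1 : ℝ) * (A + j * B) * r ^ j) atTop (𝓝 0) := by
  have habs : |r| < 1 := by rwa [abs_of_nonneg hr0]
  have h0 := tendsto_pow_const_mul_const_pow_of_abs_lt_one 0 habs
  have h1 := tendsto_pow_const_mul_const_pow_of_abs_lt_one 1 habs
  have h2 := tendsto_pow_const_mul_const_pow_of_abs_lt_one 2 habs
  have := ((h0.const_mul A).add (h1.const_mul (A + B))).add (h2.const_mul B)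
  simp only [mul_zero, add_zero] at this
  refine this.congr fun j => ?_
  ring

/-- Almost surely, for every word `v` there are arbitrarily late and long families of windows,
each contained in one of the random cylinders, whose empirical mass on the tree `v T^j` is
close to uniform in the sense of `dev`. -/
lemma ae_exists_dev_le [NeZero N] {lam p : Fin N → ℝ} (hp : ∀ i, 0 < p i)
    (hpsum : ∑ i, p i = 1)
    {μ : Measure (ℕ → Fin N)} [IsProbabilityMeasure μ]
    (hμ : ∀ (m : ℕ) (w : Fin m → Fin N),
      μ (_root_.cylinder w) = ENNReal.ofReal (wordProd p w))
    {T : Finset (List (Fin N))} {L : ℕ} {ρ P : ℝ} (hT : Homog lam p T L ρ P)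
    (hL : 1 ≤ L)
    (hTne : T.Nonempty) {a : ℝ} (ha : 0 < a) (ha1 : a ≤ 1)
    {γ : ℝ} (hγ : 0 < γ) (hθ : 1 < T.card * a * (P * Real.exp (γ * L)))
    {ℓ : ℕ → ℕ} (hmono : Monotone ℓ)
    (hfreq : ∃ᶠ j : ℕ in atTop, ∃ n₀ : ℕ, Real.exp (γ * L * (j - 1)) ≤ n₀ ∧ ℓ n₀ ≤ j * L) :
    ∀ᵐ o ∂μ, ∀ (v : List (Fin N)) (K j₀ : ℕ), ∃ j, j₀ ≤ j ∧ ∃ (I : Finset ℕ) (κ : ℝ), 0 ≤ κ ∧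
      (∀ i ∈ I, K ≤ i * (v.length + j * L) ∧
        ℓ (i * (v.length + j * L)) ≤ v.length + j * L) ∧
      dev T a κ v (v.length + j * L) j I o ≤ 1 / 16 := by
  rw [ae_all_iff]; intro v
  rw [ae_all_iff]; intro K
  rw [ae_all_iff]; intro j₀
  have hc : 0 < (T.card : ℝ) := by exact_mod_cast hTne.card_pos
  have hP : 0 < P := by
    obtain ⟨w, hw⟩ := hTne
    rw [← hT.p_eq w hw]; exact wt_pos hp w
  have hpv := wt_pos hp v
  have hL0 : (0 : ℝ) < L := by exact_mod_cast hL
  set θ := T.card * a * (P * Real.exp (γ * L)) with hθdef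
  set e := Real.exp (γ * L) with he
  have he1 : 1 < e := Real.one_lt_exp_iff.2 (by positivity)
  set C := 2 * e / wt p v with hC
  have hC0 : 0 < C := by positivity
  have hlim1 := (tendsto_poly_mul_pow v.length L (r := θ⁻¹) (by positivity)
    (inv_lt_one_of_one_lt₀ hθ)).const_mul (16 * C)
  have hlim2 := (tendsto_poly_mul_pow v.length L (r := e⁻¹) (by positivity)
    (inv_lt_one_of_one_lt₀ he1))
  rw [mul_zero] at hlim1
  rw [ae_iff]
  refine le_antisymm (le_of_forall_gt_imp_ge_of_dense fun ε hε => ?_) zero_le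
  obtain ⟨ε', hε', hεε'⟩ : ∃ ε' : ℝ, 0 < ε' ∧ ENNReal.ofReal ε' ≤ ε := by
    rcases eq_or_ne ε ∞ with rfl | h
    · exact ⟨1, one_pos, le_top⟩
    · exact ⟨ε.toReal, ENNReal.toReal_pos hε.ne' h, by rw [ENNReal.ofReal_toReal h]⟩
  have hsmall : (0 : ℝ) < (2 * (K + 1) * e)⁻¹ := by positivity
  obtain ⟨j, ⟨n₀, hn₀, hℓn₀⟩, hj1, hj2, hj3⟩ := (hfreq.and_eventually
    ((hlim1.eventually_lt_const hε').and ((hlim2.eventually_lt_const hsmall).and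
      (eventually_ge_atTop (max j₀ 1))))).exists
  have hjj0 : j₀ ≤ j := (le_max_left _ _).trans hj3
  have hj1' : 1 ≤ j := (le_max_right _ _).trans hj3
  set m := v.length + j * L with hm
  have hm1 : 1 ≤ m := by
    have : 1 * 1 ≤ j * L := Nat.mul_le_mul hj1' hL
    omega
  have hm0 : (0 : ℝ) < m := by exact_mod_cast hm1
  have hmR : (m : ℝ) = v.length + j * L := by rw [hm]; push_cast; ring
  set E := Real.exp (γ * L * (j - 1)) with hE
  have hEe : E = e ^ j * e⁻¹ := by
    rw [hE, he, ← Real.exp_nat_mul, ← Real.exp_neg, ← Real.exp_add]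
    congr 1; ring
  have hepos : 0 < e := by positivity
  -- the number of windows fitting below `E` exceeds `2 (K + 1)`
  have hEm : 2 * (K + 1) * (m : ℝ) ≤ E := by
    have h1 : (m : ℝ) * e⁻¹ ^ j ≤ (2 * (K + 1) * e)⁻¹ := by
      refine le_trans ?_ hj2.le
      rw [hmR]
      have : (0 : ℝ) ≤ (v.length + j * L) * e⁻¹ ^ j := by positivity
      nlinarith [(Nat.cast_nonneg j : (0 : ℝ) ≤ j)]
    rw [hEe]
    rw [inv_pow, mul_inv_le_iff₀ (by positivity)] at h1
    calc 2 * (K + 1) * (m : ℝ) ≤ 2 * (K + 1) * ((2 * (K + 1) * e)⁻¹ * e ^ j) := by gcongr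
      _ = e ^ j * e⁻¹ := by field_simp
  set I := Finset.Icc K ⌊E / m⌋₊ with hIdef
  have hEm' : 2 * (K + 1 : ℝ) ≤ E / m := by rwa [le_div_iff₀ hm0]
  have hfl : E / m < ⌊E / m⌋₊ + 1 := Nat.lt_floor_add_one _
  have hKfl : K ≤ ⌊E / m⌋₊ := Nat.le_floor (by
    have : (0 : ℝ) ≤ K := Nat.cast_nonneg K
    linarith)
  have hIcard : E / (2 * m) ≤ (I.card : ℝ) := by
    rw [hIdef, Nat.card_Icc, Nat.cast_sub (by omega)]
    push_cast
    have : E / (2 * m) = E / m / 2 := by field_simp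
    rw [this]
    linarith
  have hE0 : 0 < E := Real.exp_pos _
  have hI0 : 0 < (I.card : ℝ) := lt_of_lt_of_le (by positivity) hIcard
  have hIne : I.Nonempty := ⟨K, Finset.mem_Icc.2 ⟨le_rfl, hKfl⟩⟩
  set κ := ((T.card : ℝ) ^ j * (I.card * (wt p v * P ^ j)))⁻¹ with hκ
  obtain ⟨hintegrable, hbound⟩ := integral_dev hp hpsum hμ hT hTne ha ha1 v j I hIne hκ
  have hb2 : (j + 1) * a⁻¹ ^ j * κ ≤ C * ((j + 1 : ℝ) * (v.length + j * L) * θ⁻¹ ^ j) := by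
    have h1 : κ ≤ ((T.card : ℝ) ^ j * (E / (2 * m) * (wt p v * P ^ j)))⁻¹ := by
      rw [hκ]
      gcongr
    refine (mul_le_mul_of_nonneg_left h1 (by positivity)).trans (le_of_eq ?_)
    rw [← hmR, hEe, hC, hθdef, inv_pow, inv_pow, mul_pow, mul_pow, mul_pow]
    field_simp
  refine le_trans (le_trans (measure_mono (t := {o | 1 / 16 ≤ dev T a κ v m j I o}) ?_) ?_) hεε'
  · intro o ho
    rw [mem_ofPred_eq]
    by_contra hlt
    rw [not_le] at hlt
    refine ho ⟨j, hjj0, I, κ, by rw [hκ]; positivity, fun i hi => ?_, hlt.le⟩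
    rw [hIdef, Finset.mem_Icc] at hi
    refine ⟨hi.1.trans (Nat.le_mul_of_pos_right i hm1), ?_⟩
    have h1 : (i : ℝ) * m ≤ n₀ := by
      have : (i : ℝ) ≤ E / m := (Nat.le_floor_iff (by positivity)).1 hi.2
      rw [le_div_iff₀ hm0] at this
      exact this.trans hn₀
    have h2 : i * m ≤ n₀ := by exact_mod_cast h1
    exact (hmono h2).trans (hℓn₀.trans (by omega))
  · have hmk := mul_meas_ge_le_integral_of_nonneg
      (Eventually.of_forall fun o => dev_nonneg T ha κ v m j I o) hintegrable (1 / 16)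
    rw [← ofReal_measureReal]
    refine ENNReal.ofReal_le_ofReal ?_
    have := hmk.trans (hbound.trans hb2)
    linarith

end DynCover

namespace DynCover

/-! ### Avoiding a small family of cylinders inside the limsup set -/

variable {N : ℕ}

lemma length_TP {T : Finset (List (Fin N))} {L : ℕ} (hT : ∀ w ∈ T, w.length = L) (l : ℕ) :
    ∀ x ∈ TP T l, x.length = l * L := by
  induction l with
  | zero => simp [TP]
  | succ l ih =>
    intro x hx
    obtain ⟨z, hz, t, ht, rfl⟩ := mem_catF.1 hx
    rw [List.length_append, hT z hz, ih t ht]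
    ring

/-- A word of `T^j` extending `u ∈ T^l` is `u` followed by a word of `T^(j-l)`. -/
lemma mem_TP_of_prefix {T : Finset (List (Fin N))} {L : ℕ} (hT : ∀ w ∈ T, w.length = L)
    {l j : ℕ} (hlj : l ≤ j) {u w : List (Fin N)} (hu : u.length = l * L) (hw : w ∈ TP T j)
    (huw : u <+: w) : u ∈ TP T l ∧ ∃ y ∈ TP T (j - l), u ++ y = w := by
  obtain ⟨k, rfl⟩ := Nat.exists_eq_add_of_le hlj
  rw [TP_add] at hw
  obtain ⟨x, hx, y, hy, rfl⟩ := mem_catF.1 hw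
  have hxl : x.length = l * L := length_TP hT l x hx
  have : u = x := by
    have h1 : x <+: x ++ y := List.prefix_append _ _
    exact (List.prefix_of_prefix_length_le huw h1 (by omega)).eq_of_length (by omega)
  subst this
  exact ⟨hx, y, by simpa using hy, rfl⟩

/-- If the empirical mass is nearly uniform, some window avoids every subtree of a family `B`
whose total uniform weight is small. -/
lemma exists_window_avoiding {T : Finset (List (Fin N))} {L : ℕ} (hT : ∀ w ∈ T, w.length = L)
    {a κ : ℝ} (ha : 0 < a) (hTa : (T.card : ℝ)⁻¹ ≤ a) (hκ : 0 ≤ κ) {v : List (Fin N)}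
    {m j : ℕ} {I : Finset ℕ} {o : ℕ → Fin N} (hdev : dev T a κ v m j I o ≤ 1 / 16)
    (B : ℕ → Finset (List (Fin N))) (hB : ∀ l ≤ j, B l ⊆ TP T l)
    (hBl : ∀ l ≤ j, ∀ u ∈ B l, u.length = l * L)
    (hsum : ∑ l ∈ Finset.range (j + 1), ∑ _u ∈ B l, a ^ l ≤ 1 / 8) :
    ∃ i ∈ I, ∃ w ∈ TP T j, pre (sh (i * m) o) m = v ++ w ∧
      ∀ l ≤ j, ∀ u ∈ B l, ¬ u <+: w := by
  by_contra hcon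
  push Not at hcon
  set X : ℕ → List (Fin N) → ℝ :=
    fun l u => κ * cnt m I (catF {v ++ u} (TP T (j - l))) o with hX
  have hX0 : X 0 [] ≤ ∑ l ∈ Finset.range (j + 1), ∑ u ∈ B l, X l u := by
    simp only [hX, ← Finset.mul_sum]
    refine mul_le_mul_of_nonneg_left ?_ hκ
    simp only [cnt]
    have h1 : ∑ l ∈ Finset.range (j + 1), ∑ u ∈ B l, ∑ i ∈ I,
        hit m (catF {v ++ u} (TP T (j - l))) i o
        = ∑ i ∈ I, ∑ l ∈ Finset.range (j + 1), ∑ u ∈ B l,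
          hit m (catF {v ++ u} (TP T (j - l))) i o := by
      rw [Finset.sum_comm (s := I)]
      exact Finset.sum_congr rfl fun l _ => Finset.sum_comm
    rw [h1]
    refine Finset.sum_le_sum fun i hi => ?_
    have hnn : ∀ l u, 0 ≤ hit m (catF {v ++ u} (TP T (j - l))) i o := fun l u => by
      unfold hit; split_ifs <;> simp
    by_cases hmem : pre (sh (i * m) o) m ∈ catF {v ++ []} (TP T (j - 0))
    · obtain ⟨x, hx, w, hw, hxw⟩ := mem_catF.1 hmem
      rw [Finset.mem_singleton, List.append_nil] at hx
      subst hx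
      obtain ⟨l, hl, u, hu, huw⟩ := hcon i hi w hw hxw.symm
      obtain ⟨-, y, hy, huy⟩ := mem_TP_of_prefix hT hl (hBl l hl u hu) hw huw
      have h2 : hit m (catF {x ++ u} (TP T (j - l))) i o = 1 := by
        unfold hit
        rw [if_pos]
        rw [← hxw, ← huy, ← List.append_assoc]
        exact mem_catF.2 ⟨_, Finset.mem_singleton_self _, y, hy, rfl⟩
      calc hit m (catF {x ++ []} (TP T (j - 0))) i o ≤ 1 := by
            unfold hit; split_ifs <;> simp
        _ = hit m (catF {x ++ u} (TP T (j - l))) i o := h2.symm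
        _ ≤ ∑ u ∈ B l, hit m (catF {x ++ u} (TP T (j - l))) i o :=
            Finset.single_le_sum (f := fun u => hit m (catF {x ++ u} (TP T (j - l))) i o)
              (fun u _ => hnn l u) hu
        _ ≤ _ := Finset.single_le_sum
              (f := fun l => ∑ u ∈ B l, hit m (catF {x ++ u} (TP T (j - l))) i o)
              (fun l _ => Finset.sum_nonneg fun u _ => hnn l u)
              (Finset.mem_range.2 (Nat.lt_succ_of_le hl))
    · have : hit m (catF {v ++ []} (TP T (j - 0))) i o = 0 := by
        unfold hit; rw [if_neg hmem]
      rw [this]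
      exact Finset.sum_nonneg fun l _ => Finset.sum_nonneg fun u _ => hnn l u
  -- `x ≤ t + |x - t| ≤ 2 a^l + a^(-l) (x - t)^2` with `t = |T|^(-l) ≤ a^l`
  have hXb : ∀ l u, X l u ≤ 2 * a ^ l + a⁻¹ ^ l * (X l u - (T.card : ℝ)⁻¹ ^ l) ^ 2 := by
    intro l u
    have ht : (T.card : ℝ)⁻¹ ^ l ≤ a ^ l := by gcongr
    have hal : 0 < a ^ l := by positivity
    rw [inv_pow a]
    set t := (T.card : ℝ)⁻¹ ^ l
    have h3 : X l u - t ≤ a ^ l + (a ^ l)⁻¹ * (X l u - t) ^ 2 := by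
      rw [← sub_nonneg]
      have : a ^ l + (a ^ l)⁻¹ * (X l u - t) ^ 2 - (X l u - t)
          = (a ^ l)⁻¹ * ((X l u - t - a ^ l / 2) ^ 2 + 3 / 4 * (a ^ l) ^ 2) := by
        field_simp; ring
      rw [this]; positivity
    linarith
  have hup : X 0 [] ≤ 5 / 16 := by
    calc X 0 [] ≤ ∑ l ∈ Finset.range (j + 1), ∑ u ∈ B l, X l u := hX0
      _ ≤ ∑ l ∈ Finset.range (j + 1), (∑ u ∈ B l, 2 * a ^ l
          + a⁻¹ ^ l * ∑ u ∈ TP T l, (X l u - (T.card : ℝ)⁻¹ ^ l) ^ 2) := by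
          refine Finset.sum_le_sum fun l hl => ?_
          have hlj : l ≤ j := Nat.lt_succ_iff.1 (Finset.mem_range.1 hl)
          refine (Finset.sum_le_sum fun u _ => hXb l u).trans ?_
          rw [Finset.sum_add_distrib, ← Finset.mul_sum (B l) _ (a⁻¹ ^ l)]
          have := Finset.sum_le_sum_of_subset_of_nonneg
            (f := fun u => (X l u - (T.card : ℝ)⁻¹ ^ l) ^ 2) (hB l hlj)
            (fun _ _ _ => sq_nonneg _)
          gcongr
      _ = 2 * ∑ l ∈ Finset.range (j + 1), ∑ _u ∈ B l, a ^ l + dev T a κ v m j I o := by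
          rw [Finset.sum_add_distrib, dev, Finset.mul_sum]
          simp only [Finset.mul_sum, hX]
      _ ≤ 5 / 16 := by linarith
  have hlow : (X 0 [] - 1) ^ 2 ≤ 1 / 16 := by
    refine le_trans ?_ hdev
    unfold dev
    have h0 : (X 0 [] - 1) ^ 2 = a⁻¹ ^ 0 * ∑ u ∈ TP T 0,
        (κ * cnt m I (catF {v ++ u} (TP T (j - 0))) o - (T.card : ℝ)⁻¹ ^ 0) ^ 2 := by
      simp [TP, hX]
    rw [h0]
    exact Finset.single_le_sum (f := fun l => a⁻¹ ^ l * ∑ u ∈ TP T l,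
      (κ * cnt m I (catF {v ++ u} (TP T (j - l))) o - (T.card : ℝ)⁻¹ ^ l) ^ 2)
      (fun l _ => mul_nonneg (by positivity) (Finset.sum_nonneg fun _ _ => sq_nonneg _))
      (Finset.mem_range.2 (Nat.succ_pos j))
  nlinarith

/-- The word `v` is not yet inside a cylinder of the family `C`, and the cylinders of `C` inside
`[v]` have relative `r`-dimensional size at most `δ`. -/
def Good (lam : Fin N → ℝ) (r δ : ℝ) (C : Set (List (Fin N))) (v : List (Fin N)) : Prop :=
  (∀ c ∈ C, ¬ c <+: v) ∧ ∀ F : Finset (List (Fin N)), (∀ c ∈ F, c ∈ C ∧ v <+: c) →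
    ∑ c ∈ F, wt lam c ^ r ≤ δ * wt lam v ^ r

open Classical in
/-- One step of the construction: a good word has a good proper extension that is a late window
of `o` contained in a random cylinder. -/
lemma Good.extend {lam p : Fin N → ℝ} (hlam : ∀ i, lam i ∈ Set.Ioo (0 : ℝ) 1)
    {T : Finset (List (Fin N))} {L : ℕ} {ρ P : ℝ} (hT : Homog lam p T L ρ P)
    (hL : 1 ≤ L) (hρ0 : 0 < ρ) (hρ1 : ρ < 1) {r s : ℝ} (hr : 0 < r) (hrs : r < s)
    (hTρ : (T.card : ℝ)⁻¹ ≤ ρ ^ s) {b δ : ℝ} (hb : 0 < b) (hbl : ∀ i, b ≤ lam i)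
    (hδ : 0 < δ) (hδb : 16 * δ ≤ (b ^ L) ^ r)
    {ℓ : ℕ → ℕ} {o : ℕ → Fin N}
    (ho : ∀ (v : List (Fin N)) (K j₀ : ℕ), ∃ j, j₀ ≤ j ∧ ∃ (I : Finset ℕ) (κ : ℝ), 0 ≤ κ ∧
      (∀ i ∈ I, K ≤ i * (v.length + j * L) ∧
        ℓ (i * (v.length + j * L)) ≤ v.length + j * L) ∧
      dev T (ρ ^ s) κ v (v.length + j * L) j I o ≤ 1 / 16)
    {C : Set (List (Fin N))} {v : List (Fin N)} (hv : Good lam r δ C v) (K : ℕ) :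
    ∃ w n, v <+: w ∧ v.length < w.length ∧ Good lam r δ C w ∧ K ≤ n ∧ ℓ n ≤ w.length ∧
      w = pre (sh n o) w.length := by
  have hlp : ∀ i, 0 < lam i := fun i => (hlam i).1
  have hs : 0 < s := hr.trans hrs
  set a := ρ ^ s with ha
  have ha0 : 0 < a := by positivity
  have hsr : ρ ^ (s - r) < 1 := Real.rpow_lt_one hρ0.le hρ1 (by linarith)
  obtain ⟨j₀, hj₀⟩ := exists_pow_lt_of_lt_one (show (0 : ℝ) < 1 / 16 by norm_num) hsr
  obtain ⟨j, hj, I, κ, hκ, hI, hdev⟩ := ho v K (max j₀ 1)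
  have hj1 : 1 ≤ j := (le_max_right _ _).trans hj
  have hjsmall : (ρ ^ (s - r)) ^ j ≤ 1 / 16 :=
    (pow_le_pow_of_le_one (by positivity) hsr.le ((le_max_left _ _).trans hj)).trans hj₀.le
  have hwv := wt_pos hlp v
  have hwvr : 0 < wt lam v ^ r := by positivity
  -- the words at which a cylinder of `C` ends within the next block
  set Ba : ℕ → Finset (List (Fin N)) := fun l => (TP T l).filter fun u =>
    ∃ c ∈ C, v ++ u <+: c ∧ c.length < (v ++ u).length + L with hBa
  -- the words of the last level that violate the size condition
  set Bb : Finset (List (Fin N)) := (TP T j).filter fun u =>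
    ∃ F : Finset (List (Fin N)), (∀ c ∈ F, c ∈ C ∧ v ++ u <+: c) ∧
      δ * wt lam (v ++ u) ^ r < ∑ c ∈ F, wt lam c ^ r with hBb
  set B : ℕ → Finset (List (Fin N)) := fun l => Ba l ∪ if l = j then Bb else ∅ with hB
  have hBsub : ∀ l, B l ⊆ TP T l := by
    intro l u hu
    simp only [hB, Finset.mem_union] at hu
    rcases hu with hu | hu
    · exact (Finset.mem_filter.1 hu).1
    · split_ifs at hu with h
      · rw [h]; exact (Finset.mem_filter.1 hu).1
      · simp at hu
  have hsumA : ∑ l ∈ Finset.range (j + 1), ∑ _u ∈ Ba l, a ^ l ≤ 1 / 16 := by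
    have hex : ∀ x : (_ : ℕ) × List (Fin N), ∃ c, x.2 ∈ Ba x.1 →
        c ∈ C ∧ v ++ x.2 <+: c ∧ c.length < (v ++ x.2).length + L := by
      intro x
      by_cases h : x.2 ∈ Ba x.1
      · obtain ⟨c, hc⟩ := (Finset.mem_filter.1 h).2
        exact ⟨c, fun _ => hc⟩
      · exact ⟨[], fun h' => absurd h' h⟩
    choose g hg using hex
    set S := (Finset.range (j + 1)).sigma Ba with hS
    have hSm : ∀ x ∈ S, x.2 ∈ Ba x.1 := fun x hx => (Finset.mem_sigma.1 hx).2
    have hSl : ∀ x ∈ S, x.2.length = x.1 * L := fun x hx =>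
      (hT.TP x.1).len _ (Finset.mem_filter.1 (hSm x hx)).1
    have hinj : Set.InjOn g S := by
      intro x hx y hy hxy
      obtain ⟨-, hx1, hx2⟩ := hg x (hSm x hx)
      obtain ⟨-, hy1, hy2⟩ := hg y (hSm y hy)
      rw [hxy] at hx1 hx2
      have hlx := hx1.length_le
      have hly := hy1.length_le
      have ex := hSl x hx
      have ey := hSl y hy
      rw [List.length_append] at hlx hly hx2 hy2
      have e1 : x.1 = y.1 := by
        have h1 : x.1 * L < (y.1 + 1) * L := by rw [add_mul]; omega
        have h2 : y.1 * L < (x.1 + 1) * L := by rw [add_mul]; omega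
        have := Nat.lt_of_mul_lt_mul_right h1
        have := Nat.lt_of_mul_lt_mul_right h2
        omega
      have e2 : v ++ x.2 = v ++ y.2 := by
        refine (List.prefix_of_prefix_length_le hx1 hy1 ?_).eq_of_length ?_ <;>
          simp [ex, ey, e1]
      exact Sigma.ext e1 (heq_of_eq (List.append_cancel_left e2))
    have h1 : ∑ c ∈ S.image g, wt lam c ^ r ≤ δ * wt lam v ^ r := by
      refine hv.2 _ fun c hc => ?_
      obtain ⟨x, hx, rfl⟩ := Finset.mem_image.1 hc
      obtain ⟨h1, h2, -⟩ := hg x (hSm x hx)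
      exact ⟨h1, (List.prefix_append _ _).trans h2⟩
    rw [Finset.sum_image hinj] at h1
    have h2 : ∀ x ∈ S, (b ^ L) ^ r * wt lam v ^ r * a ^ x.1 ≤ wt lam (g x) ^ r := by
      intro x hx
      obtain ⟨-, ⟨t, ht⟩, hlt⟩ := hg x (hSm x hx)
      have htl : t.length ≤ L := by
        rw [← ht, List.length_append] at hlt; omega
      have hbt : b ^ L ≤ wt lam t := by
        have hb1 : b ≤ 1 := (hbl (o 0)).trans (hlam _).2.le
        exact (pow_le_pow_of_le_one hb.le hb1 htl).trans (pow_le_wt hb.le hbl t)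
      have hρx : wt lam x.2 = ρ ^ x.1 :=
        (hT.TP x.1).lam_eq _ (Finset.mem_filter.1 (hSm x hx)).1
      have hax : a ^ x.1 ≤ (ρ ^ x.1) ^ r := by
        rw [ha, ← Real.rpow_natCast, ← Real.rpow_mul hρ0.le, mul_comm, Real.rpow_mul hρ0.le,
          Real.rpow_natCast]
        exact Real.rpow_le_rpow_of_exponent_ge (by positivity)
          (pow_le_one₀ hρ0.le hρ1.le) hrs.le
      rw [← ht, wt_append, wt_append, hρx, Real.mul_rpow (by positivity) (wt_pos hlp t).le,
        Real.mul_rpow hwv.le (by positivity)]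
      have hbt' : (b ^ L) ^ r ≤ wt lam t ^ r := Real.rpow_le_rpow (by positivity) hbt hr.le
      calc (b ^ L) ^ r * wt lam v ^ r * a ^ x.1
          ≤ wt lam t ^ r * wt lam v ^ r * (ρ ^ x.1) ^ r := by
            have := wt_pos hlp t
            gcongr
        _ = _ := by ring
    have h3 := (Finset.sum_le_sum h2).trans h1
    rw [← Finset.mul_sum, hS, Finset.sum_sigma] at h3
    have hbr : 0 < (b ^ L) ^ r := by positivity
    set Z := ∑ l ∈ Finset.range (j + 1), ∑ _u ∈ Ba l, a ^ l with hZ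
    have h4 : (b ^ L) ^ r * Z ≤ δ := by
      have : (b ^ L) ^ r * Z * wt lam v ^ r ≤ δ * wt lam v ^ r := by linarith
      exact le_of_mul_le_mul_right this hwvr
    have h5 : (b ^ L) ^ r * Z ≤ (b ^ L) ^ r * (1 / 16) := by linarith
    exact le_of_mul_le_mul_left h5 hbr
  have hsumB : ∑ _u ∈ Bb, a ^ j ≤ 1 / 16 := by
    have hex : ∀ u, ∃ F : Finset (List (Fin N)), u ∈ Bb → (∀ c ∈ F, c ∈ C ∧ v ++ u <+: c) ∧
        δ * wt lam (v ++ u) ^ r < ∑ c ∈ F, wt lam c ^ r := by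
      intro u
      by_cases h : u ∈ Bb
      · obtain ⟨F, hF⟩ := (Finset.mem_filter.1 h).2
        exact ⟨F, fun _ => hF⟩
      · exact ⟨∅, fun h' => absurd h' h⟩
    choose F hF using hex
    have hBl : ∀ u ∈ Bb, u.length = j * L := fun u hu =>
      (hT.TP j).len _ (Finset.mem_filter.1 hu).1
    have hdisj : Set.PairwiseDisjoint (↑Bb) F := by
      intro x hx y hy hxy
      rw [Function.onFun, Finset.disjoint_left]
      intro c hcx hcy
      have h1 := ((hF x hx).1 c hcx).2
      have h2 := ((hF y hy).1 c hcy).2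
      refine hxy (List.append_cancel_left ((List.prefix_of_prefix_length_le h1 h2 ?_).eq_of_length
        ?_ : v ++ x = v ++ y)) <;> simp [hBl x hx, hBl y hy]
    have h1 : ∑ c ∈ Bb.biUnion F, wt lam c ^ r ≤ δ * wt lam v ^ r := by
      refine hv.2 _ fun c hc => ?_
      obtain ⟨u, hu, hcu⟩ := Finset.mem_biUnion.1 hc
      obtain ⟨h1, h2⟩ := (hF u hu).1 c hcu
      exact ⟨h1, (List.prefix_append _ _).trans h2⟩
    rw [Finset.sum_biUnion hdisj] at h1
    have h2 : ∀ u ∈ Bb, δ * wt lam v ^ r * (16 * a ^ j) ≤ ∑ c ∈ F u, wt lam c ^ r := by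
      intro u hu
      refine le_trans ?_ (hF u hu).2.le
      have hρx : wt lam u = ρ ^ j := (hT.TP j).lam_eq _ (Finset.mem_filter.1 hu).1
      rw [wt_append, hρx, Real.mul_rpow hwv.le (by positivity)]
      have hax : a ^ j = (ρ ^ j) ^ r * (ρ ^ (s - r)) ^ j := by
        rw [ha, ← Real.rpow_natCast, ← Real.rpow_natCast, ← Real.rpow_natCast,
          ← Real.rpow_mul hρ0.le, ← Real.rpow_mul hρ0.le, ← Real.rpow_mul hρ0.le,
          ← Real.rpow_add hρ0]
        congr 1; ring
      have : 16 * a ^ j ≤ (ρ ^ j) ^ r := by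
        have h0 : 0 < (ρ ^ j) ^ r := by positivity
        rw [hax]; nlinarith
      calc δ * wt lam v ^ r * (16 * a ^ j) ≤ δ * wt lam v ^ r * (ρ ^ j) ^ r := by gcongr
        _ = _ := by ring
    have h3 := (Finset.sum_le_sum h2).trans h1
    rw [← Finset.mul_sum, ← Finset.mul_sum] at h3
    have h4 : δ * wt lam v ^ r * (16 * ∑ _u ∈ Bb, a ^ j) ≤ δ * wt lam v ^ r * 1 := by linarith
    have := le_of_mul_le_mul_left h4 (by positivity)
    linarith
  have hsum : ∑ l ∈ Finset.range (j + 1), ∑ _u ∈ B l, a ^ l ≤ 1 / 8 := by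
    have h1 : ∀ l ∈ Finset.range (j + 1), ∑ _u ∈ B l, a ^ l
        ≤ ∑ _u ∈ Ba l, a ^ l + if l = j then ∑ _u ∈ Bb, a ^ j else 0 := by
      intro l _
      have hpos : 0 ≤ a ^ l := by positivity
      simp only [hB, Finset.sum_const, nsmul_eq_mul]
      have := Finset.card_union_le (Ba l) (if l = j then Bb else ∅)
      split_ifs at this ⊢ with h
      · subst h
        rw [← add_mul]
        gcongr
        exact_mod_cast this
      · simp
    refine (Finset.sum_le_sum h1).trans ?_
    rw [Finset.sum_add_distrib, Finset.sum_ite_eq' (Finset.range (j + 1)) j,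
      if_pos (Finset.mem_range.2 (Nat.lt_succ_self j))]
    linarith
  obtain ⟨i, hi, w, hw, hwin, hav⟩ := exists_window_avoiding hT.len ha0 hTρ hκ hdev B
    (fun l _ => hBsub l) (fun l _ u hu => (hT.TP l).len u (hBsub l hu)) hsum
  have hwl : w.length = j * L := (hT.TP j).len w hw
  have hjL : 1 * 1 ≤ j * L := Nat.mul_le_mul hj1 hL
  have hlen : (v ++ w).length = v.length + j * L := by rw [List.length_append, hwl]
  refine ⟨v ++ w, i * (v.length + j * L), List.prefix_append _ _, by omega, ⟨?_, ?_⟩,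
    (hI i hi).1, by rw [hlen]; exact (hI i hi).2, by rw [hlen, hwin]⟩
  · intro c hc hcw
    have hvc : v <+: c := by
      rcases List.prefix_or_prefix_of_prefix hcw (List.prefix_append v w) with h | h
      · exact absurd h (hv.1 c hc)
      · exact h
    obtain ⟨t, rfl⟩ := hvc
    have htw : t <+: w := (List.prefix_append_right_inj v).1 hcw
    set l := t.length / L with hl
    have hdm := Nat.div_add_mod t.length L
    have hml := Nat.mod_lt t.length hL
    have htl := htw.length_le
    have hlj : l ≤ j := by
      rw [hl]; exact Nat.div_le_of_le_mul (by rw [mul_comm]; omega)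
    have hlL : l * L ≤ t.length := Nat.div_mul_le_self _ _
    have hLl : L * l = l * L := mul_comm _ _
    have hul : (t.take (l * L)).length = l * L := by rw [List.length_take]; omega
    have hut : t.take (l * L) <+: t := List.take_prefix _ _
    refine hav l hlj (t.take (l * L)) ?_ (hut.trans htw)
    refine Finset.mem_union_left _ (Finset.mem_filter.2
      ⟨(mem_TP_of_prefix hT.len hlj hul hw (hut.trans htw)).1, _, hc,
        (List.prefix_append_right_inj v).2 hut, ?_⟩)
    rw [List.length_append, List.length_append, hul]
    rw [← hl] at hdm
    omega
  · intro F hF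
    by_contra hlt
    rw [not_le] at hlt
    refine hav j le_rfl w ?_ (List.prefix_refl w)
    refine Finset.mem_union_right _ ?_
    rw [if_pos rfl]
    exact Finset.mem_filter.2 ⟨hw, F, hF, hlt⟩

/-- If every word is good-extendable, the limsup set is not covered by `C`. -/
lemma exists_mem_limsup_not_covered {lam : Fin N → ℝ} {r δ : ℝ} {C : Set (List (Fin N))}
    {ℓ : ℕ → ℕ} {o : ℕ → Fin N} (h0 : Good lam r δ C [])
    (hext : ∀ v, Good lam r δ C v → ∀ K : ℕ, ∃ w n, v <+: w ∧ v.length < w.length ∧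
      Good lam r δ C w ∧ K ≤ n ∧ ℓ n ≤ w.length ∧ w = pre (sh n o) w.length) :
    ∃ x ∈ limsupCylinders ℓ o, ∀ c ∈ C, pre x c.length ≠ c := by
  have hex : ∀ (v : {v // Good lam r δ C v}) (K : ℕ), ∃ w : {v // Good lam r δ C v}, ∃ n,
      v.1 <+: w.1 ∧ v.1.length < w.1.length ∧ K ≤ n ∧ ℓ n ≤ w.1.length ∧
        w.1 = pre (sh n o) w.1.length := by
    intro v K
    obtain ⟨w, n, h1, h2, h3, h4⟩ := hext v.1 v.2 K
    exact ⟨⟨w, h3⟩, n, h1, h2, h4⟩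
  choose g ν hg using hex
  let V : ℕ → {v // Good lam r δ C v} := fun n => Nat.rec ⟨[], h0⟩ (fun n v => g v n) n
  have hV : ∀ n, V (n + 1) = g (V n) n := fun n => rfl
  have hstep : ∀ n, (V n).1 <+: (V (n + 1)).1 := fun n => by rw [hV]; exact (hg _ _).1
  have hmono : ∀ {a b}, a ≤ b → (V a).1 <+: (V b).1 := by
    intro a b hab
    induction b, hab using Nat.le_induction with
    | base => exact List.prefix_refl _
    | succ b _ ih => exact ih.trans (hstep b)
  have hlen : ∀ n, n ≤ (V n).1.length := by
    intro n
    induction n with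
    | zero => exact Nat.zero_le _
    | succ n ih =>
      have := (hg (V n) n).2.1
      rw [← hV] at this
      omega
  let x : ℕ → Fin N := fun n => (V (n + 1)).1[n]'(hlen (n + 1))
  have hx : ∀ n, pre x (V n).1.length = (V n).1 := by
    intro n
    refine List.ext_getElem (by simp) fun i h1 h2 => ?_
    simp only [pre, List.getElem_map, List.getElem_range, x]
    rcases le_total (i + 1) n with h | h
    · exact (hmono h).getElem _
    · exact ((hmono h).getElem h2).symm
  refine ⟨x, mem_limsup_iff.2 fun k => ?_, fun c hc hcx => ?_⟩
  · obtain ⟨-, -, h1, h2, h3⟩ := hg (V k) k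
    rw [← hV] at h2 h3
    refine ⟨ν (V k) k, h1, ?_⟩
    have h4 : pre x (ℓ (ν (V k) k)) <+: (V (k + 1)).1 := by
      rw [← hx (k + 1)]; exact pre_prefix x h2
    rw [h3] at h4
    simpa using eq_pre_of_prefix h4
  · refine (V c.length).2.1 c hc ?_
    rw [← hx c.length, ← hcx]
    simpa using pre_prefix x (hlen c.length)

end DynCover

namespace DynCover

/-! ### Choosing a homogeneous family of words -/

variable {N : ℕ}

/-- Two vectors of a finite planar family that together dominate both coordinates: if for every
`q ∈ [0,1]` some `(1 - q) x_c + q y_c` is positive, then a nonnegative integer combination of two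
of the points `(x_c, y_c)` has both coordinates positive. -/
lemma exists_pos_combination {ι : Type*} (S : Finset ι) (x y : ι → ℝ)
    (h : ∀ q ∈ Set.Icc (0 : ℝ) 1, ∃ c ∈ S, 0 < (1 - q) * x c + q * y c) :
    ∃ c₁ ∈ S, ∃ c₂ ∈ S, ∃ k₁ k₂ : ℕ, 0 < k₁ * x c₁ + k₂ * x c₂ ∧ 0 < k₁ * y c₁ + k₂ * y c₂ := by
  classical
  by_cases hboth : ∃ c ∈ S, 0 < x c ∧ 0 < y c
  · obtain ⟨c, hc, h1, h2⟩ := hboth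
    exact ⟨c, hc, c, hc, 1, 0, by simpa using h1, by simpa using h2⟩
  push Not at hboth
  obtain ⟨c₀, hc₀, h0⟩ := h 0 (by simp)
  have hne : (S.filter fun c => 0 < x c).Nonempty :=
    ⟨c₀, Finset.mem_filter.2 ⟨hc₀, by simpa using h0⟩⟩
  obtain ⟨c₁, hc₁, hmax⟩ := Finset.exists_max_image _ (fun c => x c / (x c - y c)) hne
  obtain ⟨hc₁S, hx₁⟩ := Finset.mem_filter.1 hc₁
  have hy₁ := hboth c₁ hc₁S hx₁
  have hd₁ : 0 < x c₁ - y c₁ := by linarith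
  set q := x c₁ / (x c₁ - y c₁) with hq
  have hq0 : 0 < q := by positivity
  have hq1 : q ≤ 1 := by rw [hq, div_le_one hd₁]; linarith
  obtain ⟨c₂, hc₂, h2⟩ := h q ⟨hq0.le, hq1⟩
  have hx₂ : x c₂ ≤ 0 := by
    by_contra hpos
    rw [not_le] at hpos
    have hy := hboth c₂ hc₂ hpos
    have hm := hmax c₂ (Finset.mem_filter.2 ⟨hc₂, hpos⟩)
    rw [div_le_iff₀ (by linarith)] at hm
    change x c₂ ≤ q * (x c₂ - y c₂) at hm
    linarith
  have hdet : 0 < x c₁ * y c₂ - x c₂ * y c₁ := by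
    have := mul_pos h2 hd₁
    have e : q * (x c₁ - y c₁) = x c₁ := by rw [hq]; field_simp
    have e2 : ((1 - q) * x c₂ + q * y c₂) * (x c₁ - y c₁)
      = (x c₁ - y c₁) * x c₂ - (q * (x c₁ - y c₁)) * x c₂
        + (q * (x c₁ - y c₁)) * y c₂ := by ring
    rw [e2, e] at this
    linarith
  set D := (x c₁ * y c₂ - x c₂ * y c₁) / x c₁ with hD
  have hD0 : 0 < D := by positivity
  obtain ⟨n, hn⟩ := exists_nat_gt (-y c₁ / D)
  rw [div_lt_iff₀ hD0] at hn
  set t := n * (-x c₂) / x c₁ with ht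
  have ht0 : 0 ≤ t := by
    have : 0 ≤ -x c₂ := by linarith
    positivity
  have hf1 := Nat.floor_le ht0
  have hf2 := Nat.lt_floor_add_one t
  have htx : t * x c₁ = n * (-x c₂) := by rw [ht]; field_simp
  refine ⟨c₁, hc₁S, c₂, hc₂, ⌊t⌋₊ + 1, n, ?_, ?_⟩
  · push_cast
    have := mul_lt_mul_of_pos_right hf2 hx₁
    linarith
  · push_cast
    have h3 : (t + 1) * y c₁ ≤ (⌊t⌋₊ + 1) * y c₁ :=
      mul_le_mul_of_nonpos_right (by linarith) hy₁
    have h4 : t * y c₁ + n * y c₂ = n * D := by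
      rw [ht, hD]; field_simp; ring
    linarith

lemma wt_lt_one {lam : Fin N → ℝ} (hlam : ∀ i, lam i ∈ Set.Ioo (0 : ℝ) 1) {w : List (Fin N)}
    (hw : w ≠ []) : wt lam w < 1 := by
  cases w with
  | nil => exact absurd rfl hw
  | cons i w =>
    rw [wt_cons]
    have h1 : wt lam w ≤ 1 := by
      simpa using wt_le_pow (fun i => (hlam i).1) (fun i => (hlam i).2.le) w
    exact (mul_le_of_le_one_right (hlam i).1.le h1).trans_lt (hlam i).2

/-- The type of a word: how often each symbol occurs. -/
def typ {n : ℕ} (w : Fin n → Fin N) : Fin N → Fin (n + 1) := fun i =>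
  ⟨(Finset.univ.filter fun k => w k = i).card,
    Nat.lt_succ_of_le ((Finset.card_le_univ _).trans (by simp))⟩

/-- The words of length `n` of a given type. -/
def typeClass (n : ℕ) (c : Fin N → Fin (n + 1)) : Finset (List (Fin N)) :=
  (Finset.univ.filter fun w : Fin n → Fin N => typ w = c).image List.ofFn

lemma prod_eq_typ {n : ℕ} (r : Fin N → ℝ) (w : Fin n → Fin N) :
    ∏ k, r (w k) = ∏ i, r i ^ (typ w i : ℕ) := by
  rw [← Finset.prod_fiberwise' Finset.univ w r]
  simp [typ]

lemma homog_typeClass (lam p : Fin N → ℝ) (n : ℕ) (c : Fin N → Fin (n + 1)) :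
    Homog lam p (typeClass n c) n (∏ i, lam i ^ (c i : ℕ)) (∏ i, p i ^ (c i : ℕ)) := by
  constructor <;> intro u hu <;> obtain ⟨w, hw, rfl⟩ := Finset.mem_image.1 hu
  · simp
  all_goals
    rw [← wordProd_eq, wordProd, prod_eq_typ, (Finset.mem_filter.1 hw).2]

lemma card_typeClass (n : ℕ) (c : Fin N → Fin (n + 1)) :
    (typeClass n c).card = (Finset.univ.filter fun w : Fin n → Fin N => typ w = c).card :=
  Finset.card_image_of_injective _ List.ofFn_injective

/-- For suitable `n` and every `q ∈ [0,1]`, some type class alone carries more than unit mass: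
there are only polynomially many types. -/
lemma exists_typeClass [NeZero N] {A B : Fin N → ℝ} (hB : ∀ i, 0 < B i)
    (H : ∀ q ∈ Set.Icc (0 : ℝ) 1, 1 < ∑ i, A i * B i ^ q) :
    ∃ n : ℕ, 1 ≤ n ∧ ∀ q ∈ Set.Icc (0 : ℝ) 1, ∃ c : Fin N → Fin (n + 1),
      1 < (typeClass n c).card * ((∏ i, A i ^ (c i : ℕ)) * (∏ i, B i ^ (c i : ℕ)) ^ q) := by
  have hcont : Continuous fun q : ℝ => ∑ i, A i * B i ^ q :=
    continuous_finsetSum _ fun i _ =>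
      continuous_const.mul (Real.continuous_const_rpow (hB i).ne')
  obtain ⟨q₀, hq₀, hmin⟩ := isCompact_Icc.exists_isMinOn (α := ℝ)
    (show (Set.Icc (0 : ℝ) 1).Nonempty from ⟨0, by simp⟩) hcont.continuousOn
  set E := ∑ i, A i * B i ^ q₀ with hE
  have hE1 : 1 < E := H q₀ hq₀
  have hlim : Tendsto (fun n : ℕ => ((n : ℝ) + 1) ^ N * E⁻¹ ^ n) atTop (𝓝 0) := by
    have h1 := (tendsto_add_atTop_iff_nat 1).2
      (tendsto_pow_const_mul_const_pow_of_abs_lt_one N (r := E⁻¹)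
        (by rw [abs_of_pos (by positivity)]; exact inv_lt_one_of_one_lt₀ hE1))
    have h2 := h1.const_mul E
    rw [mul_zero] at h2
    refine h2.congr fun n => ?_
    push_cast
    rw [pow_succ]
    field_simp
  obtain ⟨n, hn, hn1⟩ := ((hlim.eventually_lt_const one_pos).and (eventually_ge_atTop 1)).exists
  refine ⟨n, hn1, fun q hq => ?_⟩
  by_contra hcon
  push Not at hcon
  have hle : E ≤ ∑ i, A i * B i ^ q := hmin hq
  have hpow : (∑ i, A i * B i ^ q) ^ n
      = ∑ c : Fin N → Fin (n + 1), ((typeClass n c).card : ℝ) *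
        ((∏ i, A i ^ (c i : ℕ)) * (∏ i, B i ^ (c i : ℕ)) ^ q) := by
    rw [Fintype.sum_pow, ← Finset.sum_fiberwise Finset.univ typ]
    refine Finset.sum_congr rfl fun c _ => ?_
    have : ∀ w ∈ Finset.univ.filter (fun w : Fin n → Fin N => typ w = c),
        ∏ k, A (w k) * B (w k) ^ q
          = (∏ i, A i ^ (c i : ℕ)) * (∏ i, B i ^ (c i : ℕ)) ^ q := by
      intro w hw
      rw [Finset.prod_mul_distrib, Real.finsetProd_rpow _ _ fun k _ => (hB _).le,
        prod_eq_typ A, prod_eq_typ B, (Finset.mem_filter.1 hw).2]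
    rw [Finset.sum_congr rfl this, Finset.sum_const, card_typeClass, nsmul_eq_mul]
  have h1 : (∑ i, A i * B i ^ q) ^ n ≤ ((n : ℝ) + 1) ^ N := by
    rw [hpow]
    refine (Finset.sum_le_sum fun c _ => hcon c).trans (le_of_eq ?_)
    simp
  have h2 : E ^ n ≤ ((n : ℝ) + 1) ^ N := (pow_le_pow_left₀ (by positivity) hle n).trans h1
  rw [inv_pow, mul_inv_lt_iff₀ (by positivity), one_mul] at hn
  linarith

/-- If the pressure-type sums exceed `1` for all `q ∈ [0,1]`, there is a homogeneous family of
words that is large at both endpoints `q = 0` and `q = 1`, even with `α` slightly decreased. -/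
lemma exists_homog [NeZero N] {lam p : Fin N → ℝ} (hlam : ∀ i, lam i ∈ Set.Ioo (0 : ℝ) 1)
    (hp : ∀ i, 0 < p i) {s α : ℝ} (hα : 0 < α)
    (H : ∀ q ∈ Set.Icc (0 : ℝ) 1, 1 < ∑ i, lam i ^ s * (p i * Real.exp α) ^ q) :
    ∃ (T : Finset (List (Fin N))) (L : ℕ) (ρ P γ : ℝ), Homog lam p T L ρ P ∧ 1 ≤ L ∧
      T.Nonempty ∧ 0 < ρ ∧ ρ < 1 ∧ 1 ≤ T.card * ρ ^ s ∧ 0 < γ ∧ γ < α ∧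
      1 < T.card * ρ ^ s * (P * Real.exp (γ * L)) := by
  classical
  have hlp : ∀ i, 0 < lam i := fun i => (hlam i).1
  obtain ⟨n, hn, hty⟩ := exists_typeClass (A := fun i => lam i ^ s)
    (fun i => mul_pos (hp i) (Real.exp_pos α)) H
  set ρ : (Fin N → Fin (n + 1)) → ℝ := fun c => ∏ i, lam i ^ (c i : ℕ) with hρ
  set P : (Fin N → Fin (n + 1)) → ℝ := fun c => ∏ i, p i ^ (c i : ℕ) with hP
  set k : (Fin N → Fin (n + 1)) → ℝ := fun c => (typeClass n c).card with hk
  have hρ0 : ∀ c, 0 < ρ c := fun c => Finset.prod_pos fun i _ => pow_pos (hlp i) _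
  have hP0 : ∀ c, 0 < P c := fun c => Finset.prod_pos fun i _ => pow_pos (hp i) _
  set S := Finset.univ.filter fun c : Fin N → Fin (n + 1) => (typeClass n c).Nonempty with hS
  have hk0 : ∀ c ∈ S, 0 < k c := fun c hc => by
    simp only [hk]; exact_mod_cast (Finset.mem_filter.1 hc).2.card_pos
  have hAc : ∀ c : Fin N → Fin (n + 1), ∏ i, (lam i ^ s) ^ (c i : ℕ) = ρ c ^ s := by
    intro c
    rw [hρ, ← Real.finsetProd_rpow _ _ fun i _ => (pow_pos (hlp i) _).le]
    refine Finset.prod_congr rfl fun i _ => ?_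
    rw [← Real.rpow_natCast, ← Real.rpow_mul (hlp i).le, mul_comm, Real.rpow_mul (hlp i).le,
      Real.rpow_natCast]
  have hBc : ∀ c ∈ S, ∏ i, (p i * Real.exp α) ^ (c i : ℕ) = P c * Real.exp (α * n) := by
    intro c hc
    obtain ⟨u, hu⟩ := (Finset.mem_filter.1 hc).2
    have h1 := (homog_typeClass (fun _ => Real.exp α) p n c).lam_eq u hu
    have h2 : wt (fun _ => Real.exp α) u = Real.exp (α * n) := by
      rw [wt, List.map_const', List.prod_replicate,
        (homog_typeClass lam p n c).len u hu, ← Real.exp_nat_mul, mul_comm]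
    simp_rw [mul_pow]
    rw [Finset.prod_mul_distrib, ← h1, h2]
  set x : (Fin N → Fin (n + 1)) → ℝ := fun c => Real.log (k c * ρ c ^ s) with hx
  set y : (Fin N → Fin (n + 1)) → ℝ :=
    fun c => Real.log (k c * ρ c ^ s * (P c * Real.exp (α * n))) with hy
  have hxy : ∀ q ∈ Set.Icc (0 : ℝ) 1, ∃ c ∈ S, 0 < (1 - q) * x c + q * y c := by
    intro q hq
    obtain ⟨c, hc⟩ := hty q hq
    have hcS : c ∈ S := by
      refine Finset.mem_filter.2 ⟨Finset.mem_univ _, ?_⟩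
      by_contra hne
      rw [Finset.not_nonempty_iff_eq_empty] at hne
      rw [hne] at hc
      norm_num at hc
    refine ⟨c, hcS, ?_⟩
    rw [hAc, hBc c hcS, ← mul_assoc] at hc
    have hkc := hk0 c hcS
    have h1 : 0 < k c * ρ c ^ s := mul_pos hkc (Real.rpow_pos_of_pos (hρ0 c) s)
    have h2 : 0 < P c * Real.exp (α * n) := mul_pos (hP0 c) (Real.exp_pos _)
    have h3 := Real.log_pos hc
    change 0 < Real.log (k c * ρ c ^ s * (P c * Real.exp (α * n)) ^ q) at h3
    rw [Real.log_mul h1.ne' (Real.rpow_pos_of_pos h2 q).ne', Real.log_rpow h2] at h3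
    simp only [hx, hy]
    rw [Real.log_mul h1.ne' h2.ne']
    linarith
  obtain ⟨c₁, hc₁, c₂, hc₂, k₁, k₂, hX, hY⟩ := exists_pos_combination S x y hxy
  have hH := ((homog_typeClass lam p n c₁).TP k₁).cat ((homog_typeClass lam p n c₂).TP k₂)
  change Homog lam p _ (k₁ * n + k₂ * n) (ρ c₁ ^ k₁ * ρ c₂ ^ k₂) (P c₁ ^ k₁ * P c₂ ^ k₂) at hH
  set T := catF (TP (typeClass n c₁) k₁) (TP (typeClass n c₂) k₂) with hT
  set L := k₁ * n + k₂ * n with hL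
  set R := ρ c₁ ^ k₁ * ρ c₂ ^ k₂ with hR
  set Q := P c₁ ^ k₁ * P c₂ ^ k₂ with hQ
  have hcard : (T.card : ℝ) = k c₁ ^ k₁ * k c₂ ^ k₂ := by
    rw [hT, card_catF ((homog_typeClass lam p n c₁).TP k₁).len,
      card_TP (homog_typeClass lam p n c₁).len, card_TP (homog_typeClass lam p n c₂).len]
    push_cast; rfl
  have hR0 : 0 < R := mul_pos (pow_pos (hρ0 _) _) (pow_pos (hρ0 _) _)
  have hQ0 : 0 < Q := mul_pos (pow_pos (hP0 _) _) (pow_pos (hP0 _) _)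
  have hcard0 : 0 < (T.card : ℝ) := by
    rw [hcard]; exact mul_pos (pow_pos (hk0 _ hc₁) _) (pow_pos (hk0 _ hc₂) _)
  have hL1 : 1 ≤ L := by
    by_contra h0
    have : k₁ * n = 0 ∧ k₂ * n = 0 := by omega
    have e1 : k₁ = 0 := (Nat.mul_eq_zero.1 this.1).resolve_right (by omega)
    have e2 : k₂ = 0 := (Nat.mul_eq_zero.1 this.2).resolve_right (by omega)
    rw [e1, e2] at hX
    simp at hX
  have hTne : T.Nonempty := Finset.card_pos.1 (by exact_mod_cast hcard0)
  have hR1 : R < 1 := by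
    obtain ⟨w, hw⟩ := hTne
    rw [← hH.lam_eq w hw]
    refine wt_lt_one hlam fun h => ?_
    have := hH.len w hw
    rw [h] at this
    simp at this
    omega
  have hRs : 0 < R ^ s := Real.rpow_pos_of_pos hR0 s
  have hz : ∀ c ∈ S, 0 < k c * ρ c ^ s := fun c hc =>
    mul_pos (hk0 c hc) (Real.rpow_pos_of_pos (hρ0 c) s)
  have hz' : ∀ c, 0 < P c * Real.exp (α * n) := fun c => mul_pos (hP0 c) (Real.exp_pos _)
  have hRs' : R ^ s = (ρ c₁ ^ s) ^ k₁ * (ρ c₂ ^ s) ^ k₂ := by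
    rw [hR, Real.mul_rpow (pow_pos (hρ0 _) _).le (pow_pos (hρ0 _) _).le]
    simp only [← Real.rpow_natCast]
    rw [← Real.rpow_mul (hρ0 _).le, ← Real.rpow_mul (hρ0 _).le, ← Real.rpow_mul (hρ0 _).le,
      ← Real.rpow_mul (hρ0 _).le, mul_comm s, mul_comm s]
  have hXe : (T.card : ℝ) * R ^ s = Real.exp (k₁ * x c₁ + k₂ * x c₂) := by
    rw [Real.exp_add, Real.exp_nat_mul, Real.exp_nat_mul]
    simp only [hx]
    rw [Real.exp_log (hz _ hc₁), Real.exp_log (hz _ hc₂), hcard, hRs']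
    ring
  have hYe : (T.card : ℝ) * R ^ s * (Q * Real.exp (α * L))
      = Real.exp (k₁ * y c₁ + k₂ * y c₂) := by
    rw [Real.exp_add, Real.exp_nat_mul, Real.exp_nat_mul]
    simp only [hy]
    rw [Real.exp_log (mul_pos (hz _ hc₁) (hz' _)), Real.exp_log (mul_pos (hz _ hc₂) (hz' _)),
      hcard, hRs', hQ]
    have : Real.exp (α * L) = Real.exp (α * n) ^ k₁ * Real.exp (α * n) ^ k₂ := by
      rw [← Real.exp_nat_mul, ← Real.exp_nat_mul, ← Real.exp_add, hL]
      push_cast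
      congr 1; ring
    rw [this]
    ring
  set Z := k₁ * y c₁ + k₂ * y c₂ with hZ
  have hL0 : (0 : ℝ) < L := by exact_mod_cast hL1
  set ε := min (α / 2) (Z / (2 * L)) with hε
  have hε0 : 0 < ε := lt_min (by positivity) (by positivity)
  refine ⟨T, L, R, Q, α - ε, hH, hL1, hTne, hR0, hR1, ?_, ?_, by linarith, ?_⟩
  · rw [hXe]; exact (Real.one_lt_exp_iff.2 hX).le
  · have : ε ≤ α / 2 := min_le_left _ _
    linarith
  · have h1 : ε ≤ Z / (2 * L) := min_le_right _ _
    have h2 : ε * L ≤ Z / 2 := by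
      calc ε * L ≤ Z / (2 * L) * L := by gcongr
        _ = Z / 2 := by field_simp
    have h3 : Real.exp ((α - ε) * L) = Real.exp (α * L) * Real.exp (-(ε * L)) := by
      rw [← Real.exp_add]; congr 1; ring
    rw [h3, ← mul_assoc Q, ← mul_assoc, hYe, ← Real.exp_add, Real.one_lt_exp_iff]
    linarith

end DynCover

namespace DynCover

/-! ### The limsup set is not covered by families of small size -/

variable {N : ℕ}

lemma ratio_nonneg (ℓ : ℕ → ℕ) (n : ℕ) : 0 ≤ (ℓ n : ℝ) / Real.log n :=
  div_nonneg (Nat.cast_nonneg _) (Real.log_natCast_nonneg n)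

lemma eventually_ratio_gt {ℓ : ℕ → ℕ} {b : ℝ}
    (hb : b < Filter.liminf (fun n : ℕ => (ℓ n : ℝ) / Real.log n) Filter.atTop) :
    ∀ᶠ n : ℕ in atTop, b < (ℓ n : ℝ) / Real.log n :=
  eventually_lt_of_lt_liminf hb
    ⟨0, eventually_map.2 (Eventually.of_forall fun n => ratio_nonneg ℓ n)⟩

lemma frequently_ratio_lt {ℓ : ℕ → ℕ} {α γ : ℝ} (hγ : 0 < γ) (hγα : γ < α)
    (hℓ : Filter.liminf (fun n : ℕ => (ℓ n : ℝ) / Real.log n) Filter.atTop = 1 / α) :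
    ∃ᶠ n : ℕ in atTop, (ℓ n : ℝ) / Real.log n < 1 / γ := by
  by_contra hcon
  rw [not_frequently] at hcon
  simp only [not_lt] at hcon
  have hα : 0 < α := hγ.trans hγα
  rw [liminf_eq] at hℓ
  -- the supremum defining the real `liminf` is not the junk value `0` of an unbounded set
  by_cases hbdd : BddAbove {a : ℝ | ∀ᶠ n : ℕ in atTop, a ≤ (ℓ n : ℝ) / Real.log n}
  · have h1 := le_csSup hbdd hcon
    rw [hℓ] at h1
    have := one_div_lt_one_div_of_lt hγ hγα
    linarith
  · rw [Real.sSup_of_not_bddAbove hbdd] at hℓ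
    have : 0 < 1 / α := by positivity
    linarith

/-- The `liminf` condition along multiples of the block length `L`: for infinitely many `j`, some
`n₀` as large as `exp (γ L (j - 1))` has `ℓ n₀ ≤ j L`. -/
lemma frequently_block {ℓ : ℕ → ℕ} {α γ : ℝ} (hγ : 0 < γ) (hγα : γ < α) {L : ℕ} (hL : 1 ≤ L)
    (hℓ : Filter.liminf (fun n : ℕ => (ℓ n : ℝ) / Real.log n) Filter.atTop = 1 / α) :
    ∃ᶠ j : ℕ in atTop, ∃ n₀ : ℕ, Real.exp (γ * L * (j - 1)) ≤ n₀ ∧ ℓ n₀ ≤ j * L := by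
  have hL0 : (0 : ℝ) < L := by exact_mod_cast hL
  have hγL : 0 < γ * L := by positivity
  rw [frequently_atTop]
  intro J
  obtain ⟨n, hn, hnJ, hn2⟩ := ((frequently_ratio_lt hγ hγα hℓ).and_eventually
    ((eventually_ge_atTop ⌈Real.exp (γ * L * J)⌉₊).and (eventually_ge_atTop 2))).exists
  have hn0 : (0 : ℝ) < n := by exact_mod_cast (show 0 < n by omega)
  have hlog : 0 < Real.log n := Real.log_pos (by exact_mod_cast (show 1 < n by omega))
  set t := Real.log n / (γ * L) with ht
  have htp : 0 < t := by positivity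
  have htl : t * (γ * L) = Real.log n := by rw [ht]; field_simp
  refine ⟨⌈t⌉₊, ?_, n, ?_, ?_⟩
  · have h1 : γ * L * J ≤ Real.log n := by
      rw [Real.le_log_iff_exp_le hn0]
      exact (Nat.le_ceil _).trans (by exact_mod_cast hnJ)
    have h2 : (J : ℝ) ≤ t := by rw [ht, le_div_iff₀ hγL]; linarith
    exact_mod_cast h2.trans (Nat.le_ceil t)
  · rw [← Real.le_log_iff_exp_le hn0, ← htl]
    have := (Nat.ceil_lt_add_one htp.le)
    nlinarith
  · rw [div_lt_div_iff₀ hlog hγ, one_mul, ← htl] at hn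
    have h1 : (ℓ n : ℝ) * γ ≤ (⌈t⌉₊ * L : ℕ) * γ := by
      push_cast
      have := mul_le_mul_of_nonneg_right (Nat.le_ceil t) hγL.le
      linarith
    exact_mod_cast le_of_mul_le_mul_right h1 hγ

/-- Symbolic lower bound: almost surely, no family of cylinders of small total `r`-dimensional
size covers the limsup set, whenever `r < s` and the pressure-type sums at `s` exceed `1`. -/
lemma ae_not_covered [NeZero N] {lam p : Fin N → ℝ} (hlam : ∀ i, lam i ∈ Set.Ioo (0 : ℝ) 1)
    (hp : ∀ i, 0 < p i) (hpsum : ∑ i, p i = 1)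
    {μ : Measure (ℕ → Fin N)} [IsProbabilityMeasure μ]
    (hμ : ∀ (m : ℕ) (w : Fin m → Fin N),
      μ (_root_.cylinder w) = ENNReal.ofReal (wordProd p w))
    {α : ℝ} (hα : 0 < α) {ℓ : ℕ → ℕ} (hmono : Monotone ℓ)
    (hℓ : Filter.liminf (fun n : ℕ => (ℓ n : ℝ) / Real.log n) Filter.atTop = 1 / α)
    {r s : ℝ} (hr : 0 < r) (hrs : r < s)
    (H : ∀ q ∈ Set.Icc (0 : ℝ) 1, 1 < ∑ i, lam i ^ s * (p i * Real.exp α) ^ q) :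
    ∃ δ : ℝ, 0 < δ ∧ ∀ᵐ o ∂μ, ∀ C : Set (List (Fin N)),
      (∀ F : Finset (List (Fin N)), ↑F ⊆ C → ∑ c ∈ F, wt lam c ^ r ≤ δ) →
        ∃ x ∈ limsupCylinders ℓ o, ∀ c ∈ C, pre x c.length ≠ c := by
  obtain ⟨T, L, ρ, P, γ, hT, hL, hTne, hρ0, hρ1, hc, hγ, hγα, hθ⟩ := exists_homog hlam hp hα H
  obtain ⟨i₀, hi₀⟩ := Finite.exists_min lam
  set b := lam i₀ with hb
  have hb0 : 0 < b := (hlam i₀).1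
  have hb1 : b ≤ 1 := (hlam i₀).2.le
  have hs : 0 < s := hr.trans hrs
  have ha0 : 0 < ρ ^ s := by positivity
  have hcard : 0 < (T.card : ℝ) := by exact_mod_cast hTne.card_pos
  have hbr : 0 < (b ^ L) ^ r := by positivity
  have hbr1 : (b ^ L) ^ r ≤ 1 :=
    Real.rpow_le_one (by positivity) (pow_le_one₀ hb0.le hb1) hr.le
  refine ⟨(b ^ L) ^ r / 16, by positivity, ?_⟩
  filter_upwards [ae_exists_dev_le hp hpsum hμ hT hL hTne ha0
    (Real.rpow_le_one hρ0.le hρ1.le hs.le) hγ hθ hmono (frequently_block hγ hγα hL hℓ)]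
    with o ho C hC
  refine exists_mem_limsup_not_covered (lam := lam) (r := r) (δ := (b ^ L) ^ r / 16) ⟨?_, ?_⟩
    fun v hv K => hv.extend hlam hT hL hρ0 hρ1 hr hrs
      ((inv_le_iff_one_le_mul₀' hcard).2 hc) hb0 hi₀ (by positivity) (by linarith) ho K
  · intro c hcC hcn
    rw [List.prefix_nil] at hcn
    subst hcn
    have := hC {[]} (by simpa using hcC)
    simp at this
    linarith
  · intro F hF
    simpa using hC F fun c hc => (hF c hc).1

end DynCover

namespace DynCover

/-! ### Coding by similarities -/

variable {N : ℕ} {E : Type*}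

/-- The composition of the maps `f` along a finite word. -/
def wmap (f : Fin N → E → E) : List (Fin N) → E → E
  | [] => id
  | i :: w => fun y => f i (wmap f w y)

lemma wmap_append (f : Fin N → E → E) (u w : List (Fin N)) (y : E) :
    wmap f (u ++ w) y = wmap f u (wmap f w y) := by
  induction u with
  | nil => rfl
  | cons i u ih => simp only [List.cons_append, wmap, ih]

lemma prefixMap_eq (f : Fin N → E → E) (x : ℕ → Fin N) (n : ℕ) (y : E) :
    prefixMap f x n y = wmap f (pre x n) y := by
  induction n generalizing x with
  | zero => rfl
  | succ n ih =>
    have h : pre x (n + 1) = x 0 :: pre (fun k => x (k + 1)) n := by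
      simp [pre, List.range_succ_eq_map, Function.comp_def]
    rw [h]
    simp only [prefixMap, wmap, ih]

lemma wmap_mem {f : Fin N → E → E} {U : Set E} (hU : ∀ i, f i '' U ⊆ U) (w : List (Fin N))
    {y : E} (hy : y ∈ U) : wmap f w y ∈ U := by
  induction w with
  | nil => exact hy
  | cons i w ih => exact hU i (mem_image_of_mem _ ih)

section Metric

variable [MetricSpace E] {lam : Fin N → ℝ} {f : Fin N → E → E}

lemma dist_wmap (hf : ∀ i x y, dist (f i x) (f i y) = lam i * dist x y) (w : List (Fin N))
    (x y : E) : dist (wmap f w x) (wmap f w y) = wt lam w * dist x y := by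
  induction w with
  | nil => simp [wmap]
  | cons i w ih => simp only [wmap, hf, ih, wt_cons, mul_assoc]

lemma continuous_wmap (hf : ∀ i x y, dist (f i x) (f i y) = lam i * dist x y)
    (w : List (Fin N)) : Continuous (wmap f w) :=
  (LipschitzWith.of_dist_le_mul (K := Real.toNNReal (wt lam w)) fun x y => by
    rw [dist_wmap hf]
    exact mul_le_mul_of_nonneg_right (Real.le_coe_toNNReal _) dist_nonneg).continuous

lemma injective_wmap (hlam : ∀ i, 0 < lam i)
    (hf : ∀ i x y, dist (f i x) (f i y) = lam i * dist x y) (w : List (Fin N)) :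
    Function.Injective (wmap f w) := by
  intro x y hxy
  have h := dist_wmap hf w x y
  rw [hxy, dist_self] at h
  exact dist_eq_zero.1 ((mul_eq_zero.1 h.symm).resolve_left (wt_pos hlam w).ne')

/-- Under the open set condition, incomparable words map `U` to disjoint sets. -/
lemma disjoint_wmap (hlam : ∀ i, 0 < lam i)
    (hf : ∀ i x y, dist (f i x) (f i y) = lam i * dist x y)
    {U : Set E} (hU : ∀ i, f i '' U ⊆ U)
    (hUd : Pairwise fun i j => Disjoint (f i '' U) (f j '' U)) :
    ∀ u w : List (Fin N), ¬ u <+: w → ¬ w <+: u → Disjoint (wmap f u '' U) (wmap f w '' U)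
  | [], _, h, _ => absurd List.nil_prefix h
  | _ :: _, [], _, h => absurd List.nil_prefix h
  | i :: u, j :: w, h1, h2 => by
    by_cases hij : i = j
    · subst hij
      have h1' : ¬ u <+: w := fun h => h1 (List.cons_prefix_cons.2 ⟨rfl, h⟩)
      have h2' : ¬ w <+: u := fun h => h2 (List.cons_prefix_cons.2 ⟨rfl, h⟩)
      have ih := disjoint_wmap hlam hf hU hUd u w h1' h2'
      have hinj : Function.Injective (f i) := by
        have := injective_wmap hlam hf [i]
        exact this
      have e : ∀ v, wmap f (i :: v) '' U = f i '' (wmap f v '' U) := fun v => by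
        rw [image_image]; rfl
      rw [e, e]
      exact (disjoint_image_iff hinj).2 ih
    · refine (hUd hij).mono ?_ ?_
      · rintro _ ⟨y, hy, rfl⟩
        exact ⟨_, wmap_mem hU u hy, rfl⟩
      · rintro _ ⟨y, hy, rfl⟩
        exact ⟨_, wmap_mem hU w hy, rfl⟩

lemma exists_wt_le [NeZero N] (hlam : ∀ i, lam i ∈ Set.Ioo (0 : ℝ) 1) {δ : ℝ} (hδ : 0 < δ) :
    ∃ n, ∀ x : ℕ → Fin N, wt lam (pre x n) ≤ δ := by
  obtain ⟨i₁, hi₁⟩ := Finite.exists_max lam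
  obtain ⟨n, hn⟩ := exists_pow_lt_of_lt_one hδ (hlam i₁).2
  refine ⟨n, fun x => ?_⟩
  have := wt_le_pow (fun i => (hlam i).1) hi₁ (pre x n)
  rw [length_pre] at this
  exact this.trans hn.le

variable [Zero E] {π : (ℕ → Fin N) → E}

lemma coding_eq (hf : ∀ i x y, dist (f i x) (f i y) = lam i * dist x y)
    (hπ : ∀ x, Filter.Tendsto (fun n => prefixMap f x n 0) Filter.atTop (nhds (π x)))
    (x : ℕ → Fin N) (n : ℕ) : π x = wmap f (pre x n) (π (sh n x)) := by
  have h1 := ((continuous_wmap hf (pre x n)).tendsto _).comp (hπ (sh n x))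
  have h2 := (tendsto_add_atTop_iff_nat n).2 (hπ x)
  refine tendsto_nhds_unique h2 (h1.congr fun k => ?_)
  rw [Function.comp_apply, prefixMap_eq, prefixMap_eq, add_comm, pre_add, wmap_append]

lemma coding_mem [NeZero N] (hlam : ∀ i, lam i ∈ Set.Ioo (0 : ℝ) 1)
    (hf : ∀ i x y, dist (f i x) (f i y) = lam i * dist x y)
    (hπ : ∀ x, Filter.Tendsto (fun n => prefixMap f x n 0) Filter.atTop (nhds (π x)))
    {K : Set E} (hKne : K.Nonempty) (hKc : IsCompact K) (hK : K = ⋃ i, f i '' K)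
    (x : ℕ → Fin N) : π x ∈ K := by
  obtain ⟨z, hz⟩ := hKne
  have hsub : ∀ i, f i '' K ⊆ K := fun i => by
    conv_rhs => rw [hK]
    exact subset_iUnion (fun i => f i '' K) i
  obtain ⟨i₁, hi₁⟩ := Finite.exists_max lam
  have hlim : Tendsto (fun n => wmap f (pre x n) z) atTop (𝓝 (π x)) := by
    refine (tendsto_iff_of_dist ?_).1 (hπ x)
    have h1 : Tendsto (fun n : ℕ => lam i₁ ^ n * dist (0 : E) z) atTop (𝓝 (0 * dist (0 : E) z)) :=
      (tendsto_pow_atTop_nhds_zero_of_lt_one (hlam i₁).1.le (hlam i₁).2).mul_const _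
    rw [zero_mul] at h1
    refine squeeze_zero (fun _ => dist_nonneg) (fun n => ?_) h1
    rw [prefixMap_eq, dist_wmap hf]
    have := wt_le_pow (fun i => (hlam i).1) hi₁ (pre x n)
    rw [length_pre] at this
    gcongr
  exact hKc.isClosed.mem_of_tendsto hlim (Eventually.of_forall fun n => wmap_mem hsub _ hz)

end Metric

/-! ### Cut words -/

/-- The words at which the contraction ratio drops to `δ` or below for the first time. -/
def cutWords (lam : Fin N → ℝ) (δ : ℝ) : Set (List (Fin N)) :=
  {c | wt lam c ≤ δ ∧ ∀ u, u <+: c → u ≠ c → δ < wt lam u}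

lemma cut_incomparable {lam : Fin N → ℝ} {δ : ℝ} {c c' : List (Fin N)} (hc : c ∈ cutWords lam δ)
    (hc' : c' ∈ cutWords lam δ) (hne : c ≠ c') : ¬ c <+: c' := fun h =>
  absurd hc.1 (not_le.2 (hc'.2 c h hne))

lemma exists_cut [NeZero N] {lam : Fin N → ℝ} (hlam : ∀ i, lam i ∈ Set.Ioo (0 : ℝ) 1) {δ : ℝ}
    (hδ : 0 < δ) (x : ℕ → Fin N) : ∃ n, pre x n ∈ cutWords lam δ := by
  classical
  have hex : ∃ n, wt lam (pre x n) ≤ δ := by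
    obtain ⟨n, hn⟩ := exists_wt_le hlam hδ
    exact ⟨n, hn x⟩
  refine ⟨Nat.find hex, Nat.find_spec hex, fun u hu hne => ?_⟩
  have h1 := eq_pre_of_prefix hu
  have h2 : u.length < Nat.find hex := by
    refine lt_of_le_of_ne (by simpa using hu.length_le) fun h => hne ?_
    rw [h1, h]
  rw [h1]
  exact not_le.1 (Nat.find_min hex h2)

lemma lt_wt_of_cut {lam : Fin N → ℝ} {b : ℝ} (hb : 0 < b)
    (hbl : ∀ i, b ≤ lam i) {δ : ℝ} (hδ0 : 0 < δ) (hδ : δ < 1) {c : List (Fin N)}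
    (hc : c ∈ cutWords lam δ) : b * δ ≤ wt lam c := by
  rcases List.eq_nil_or_concat c with rfl | ⟨u, i, rfl⟩
  · have := hc.1
    rw [wt_nil] at this
    linarith
  · have h1 := hc.2 u (by simp) (by simp)
    rw [List.concat_eq_append, wt_append, wt_cons, wt_nil, mul_one, mul_comm]
    exact mul_le_mul h1.le (hbl i) hb.le (hδ0.le.trans h1.le)

end DynCover

namespace DynCover

/-! ### Transferring the lower bound to the attractor -/

variable {N d : ℕ}

/-- By the open set condition and a volume count, a set of diameter at most `δ` meets the images
of boundedly many cylinders of cut words at scale `δ`. -/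
lemma exists_cut_card_le [NeZero N] {lam : Fin N → ℝ}
    (hlam : ∀ i, lam i ∈ Set.Ioo (0 : ℝ) 1)
    {f : Fin N → EuclideanSpace ℝ (Fin d) → EuclideanSpace ℝ (Fin d)}
    (hf : ∀ i x y, dist (f i x) (f i y) = lam i * dist x y)
    {K : Set (EuclideanSpace ℝ (Fin d))}
    (hKne : K.Nonempty) (hKc : IsCompact K) (hK : K = ⋃ i, f i '' K)
    {U : Set (EuclideanSpace ℝ (Fin d))}
    (hUne : U.Nonempty) (hUo : IsOpen U) (hUb : Bornology.IsBounded U)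
    (hUsub : ∀ i, f i '' U ⊆ U)
    (hUdisj : Pairwise fun i j => Disjoint (f i '' U) (f j '' U))
    {π : (ℕ → Fin N) → EuclideanSpace ℝ (Fin d)}
    (hπ : ∀ x, Filter.Tendsto (fun n => prefixMap f x n 0) Filter.atTop (nhds (π x))) :
    ∃ M : ℕ, ∀ (δ : ℝ) (t : Set (EuclideanSpace ℝ (Fin d))), 0 < δ → δ < 1 →
      (∀ y ∈ t, ∀ z ∈ t, dist y z ≤ δ) → ∀ F : Finset (List (Fin N)),
      (∀ c ∈ F, c ∈ cutWords lam δ ∧ ∃ x, pre x c.length = c ∧ π x ∈ t) → F.card ≤ M := by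
  have hlp : ∀ i, 0 < lam i := fun i => (hlam i).1
  obtain ⟨i₀, hi₀⟩ := Finite.exists_min lam
  set b := lam i₀ with hb
  have hb0 : 0 < b := hlp i₀
  have hfin : Module.finrank ℝ (EuclideanSpace ℝ (Fin d)) = d := by simp
  set ν : Measure (EuclideanSpace ℝ (Fin d)) := μH[d] with hν
  have hHaar : ν.IsAddHaarMeasure := by
    have h : (μH[Module.finrank ℝ (EuclideanSpace ℝ (Fin d))] :
      Measure (EuclideanSpace ℝ (Fin d))).IsAddHaarMeasure := inferInstance
    rwa [hfin] at h
  have hUK : Bornology.IsBounded (U ∪ K) := hUb.union hKc.isBounded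
  obtain ⟨D, hD⟩ := Metric.isBounded_iff.1 hUK
  have hD0 : 0 ≤ D := by
    obtain ⟨u, hu⟩ := hUne
    exact dist_nonneg.trans (hD (Or.inl hu) (Or.inl hu))
  set R := D + 1 with hR
  have hR0 : 0 < R := by positivity
  set Q : ℝ≥0∞ := ENNReal.ofReal ((R / b) ^ d) * ν (Metric.closedBall 0 1) with hQ
  have hνU : ν U ≠ 0 := (hUo.measure_pos ν hUne).ne'
  have hνU' : ν U ≠ ∞ := hUb.measure_lt_top.ne
  have hQ' : Q ≠ ∞ := mul_ne_top ofReal_ne_top measure_closedBall_lt_top.ne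
  refine ⟨⌈(Q / ν U).toReal⌉₊, fun δ t hδ0 hδ1 ht F hF => ?_⟩
  rcases F.eq_empty_or_nonempty with rfl | ⟨c₀, hc₀⟩
  · simp
  obtain ⟨-, x₀, -, hx₀⟩ := hF c₀ hc₀
  have hsub : ∀ c ∈ F, wmap f c '' U ⊆ Metric.closedBall (π x₀) (R * δ) := by
    rintro c hc _ ⟨u, hu, rfl⟩
    obtain ⟨hcs, x, hxc, hxt⟩ := hF c hc
    have h1 : π x = wmap f c (π (sh c.length x)) := by
      have := coding_eq hf hπ x c.length
      rwa [hxc] at this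
    have h2 : dist (wmap f c u) (π x) ≤ δ * D := by
      rw [h1, dist_wmap hf]
      exact mul_le_mul hcs.1
        (hD (Or.inl hu) (Or.inr (coding_mem hlam hf hπ hKne hKc hK _))) dist_nonneg hδ0.le
    have h3 := ht _ hxt _ hx₀
    rw [Metric.mem_closedBall]
    have := dist_triangle (wmap f c u) (π x) (π x₀)
    rw [hR]; linarith
  have hlow : ∀ c ∈ F, ν U ≤ ENNReal.ofReal ((b * δ)⁻¹) ^ d * ν (wmap f c '' U) := by
    intro c hc
    have hbc := lt_wt_of_cut hb0 hi₀ hδ0 hδ1 (hF c hc).1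
    have hanti : AntilipschitzWith (Real.toNNReal ((b * δ)⁻¹)) (wmap f c) := by
      refine AntilipschitzWith.of_le_mul_dist fun x y => ?_
      rw [dist_wmap hf, Real.coe_toNNReal _ (by positivity), ← mul_assoc]
      refine le_mul_of_one_le_left dist_nonneg ?_
      rwa [inv_mul_eq_div, one_le_div (by positivity)]
    have := hanti.le_hausdorffMeasure_image (d := d) (Nat.cast_nonneg d) U
    rwa [ENNReal.rpow_natCast] at this
  have hdisj : (↑F : Set (List (Fin N))).PairwiseDisjoint fun c => wmap f c '' U := by
    intro c hc c' hc' hne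
    exact disjoint_wmap hlp hf hUsub hUdisj c c'
      (cut_incomparable (hF c hc).1 (hF c' hc').1 hne)
      (cut_incomparable (hF c' hc').1 (hF c hc).1 hne.symm)
  have hmeas : ∀ c ∈ F, MeasurableSet (wmap f c '' U) := fun c _ =>
    hUo.measurableSet.image_of_continuousOn_injOn (continuous_wmap hf c).continuousOn
      (injective_wmap hlp hf c).injOn
  have hmain : (F.card : ℝ≥0∞) * ν U ≤ Q := by
    calc (F.card : ℝ≥0∞) * ν U = ∑ _c ∈ F, ν U := by rw [Finset.sum_const, nsmul_eq_mul]
      _ ≤ ∑ c ∈ F, ENNReal.ofReal ((b * δ)⁻¹) ^ d * ν (wmap f c '' U) :=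
          Finset.sum_le_sum hlow
      _ = ENNReal.ofReal ((b * δ)⁻¹) ^ d * ν (⋃ c ∈ F, wmap f c '' U) := by
          rw [← Finset.mul_sum, measure_biUnion_finset hdisj hmeas]
      _ ≤ ENNReal.ofReal ((b * δ)⁻¹) ^ d * ν (Metric.closedBall (π x₀) (R * δ)) := by
          gcongr
          exact iUnion₂_subset hsub
      _ = Q := by
          rw [Measure.addHaar_closedBall' ν _ (by positivity), hfin, ← mul_assoc,
            ← ENNReal.ofReal_pow (by positivity), ← ENNReal.ofReal_mul (by positivity), hQ,
            ← mul_pow]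
          congr 3
          field_simp
  have h1 : (F.card : ℝ≥0∞) ≤ Q / ν U :=
    (ENNReal.le_div_iff_mul_le (Or.inl hνU) (Or.inl hνU')).2 hmain
  have h2 := toReal_mono (div_ne_top hQ' hνU) h1
  rw [toReal_natCast] at h2
  exact_mod_cast h2.trans (Nat.le_ceil _)

/-- If no family of cylinders of total `r`-dimensional size at most `δ` covers `A`, then `π(A)`
has positive `r`-dimensional Hausdorff measure. -/
lemma hausdorffMeasure_ne_zero [NeZero N] {lam : Fin N → ℝ}
    (hlam : ∀ i, lam i ∈ Set.Ioo (0 : ℝ) 1) {π : (ℕ → Fin N) → EuclideanSpace ℝ (Fin d)}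
    {M : ℕ} (hM : ∀ (δ : ℝ) (t : Set (EuclideanSpace ℝ (Fin d))), 0 < δ → δ < 1 →
      (∀ y ∈ t, ∀ z ∈ t, dist y z ≤ δ) → ∀ F : Finset (List (Fin N)),
      (∀ c ∈ F, c ∈ cutWords lam δ ∧ ∃ x, pre x c.length = c ∧ π x ∈ t) → F.card ≤ M)
    {r δ : ℝ} (hr : 0 < r) (hδ : 0 < δ) {A : Set (ℕ → Fin N)}
    (hA : ∀ C : Set (List (Fin N)),
      (∀ F : Finset (List (Fin N)), ↑F ⊆ C → ∑ c ∈ F, wt lam c ^ r ≤ δ) →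
        ∃ x ∈ A, ∀ c ∈ C, pre x c.length ≠ c) :
    μH[r] (π '' A) ≠ 0 := by
  classical
  intro h0
  have hlp : ∀ i, 0 < lam i := fun i => (hlam i).1
  set ε := δ / (2 ^ r * (M + 1) * 2) with hε
  have hε0 : 0 < ε := by positivity
  rw [Measure.hausdorffMeasure_apply] at h0
  have h1 : (⨅ (t : ℕ → Set (EuclideanSpace ℝ (Fin d))) (_ : π '' A ⊆ ⋃ n, t n)
      (_ : ∀ n, Metric.ediam (t n) ≤ ENNReal.ofReal (1 / 4)),
      ∑' n, ⨆ _ : (t n).Nonempty, Metric.ediam (t n) ^ r) < ENNReal.ofReal ε := by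
    refine lt_of_le_of_lt ?_ (ENNReal.ofReal_pos.2 hε0)
    rw [← h0]
    exact le_iSup₂ (f := fun (ρ : ℝ≥0∞) (_ : 0 < ρ) =>
      ⨅ (t : ℕ → Set (EuclideanSpace ℝ (Fin d))) (_ : π '' A ⊆ ⋃ n, t n)
      (_ : ∀ n, Metric.ediam (t n) ≤ ρ),
      ∑' n, ⨆ _ : (t n).Nonempty, Metric.ediam (t n) ^ r) (ENNReal.ofReal (1 / 4))
      (ENNReal.ofReal_pos.2 (by norm_num))
  simp only [iInf_lt_iff] at h1
  obtain ⟨t, hcov, hdiam, hsum⟩ := h1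
  have hfin : ∀ n, Metric.ediam (t n) ≠ ∞ := fun n => ((hdiam n).trans_lt ofReal_lt_top).ne
  set a : ℕ → ℝ := fun n => (Metric.ediam (t n)).toReal with ha
  have ha0 : ∀ n, 0 ≤ a n := fun n => toReal_nonneg
  have ha4 : ∀ n, a n ≤ 1 / 4 := fun n => by
    have := toReal_mono ofReal_ne_top (hdiam n)
    rwa [toReal_ofReal (by norm_num)] at this
  have hasum : ∀ G : Finset ℕ, ∑ n ∈ G, a n ^ r ≤ ε := by
    intro G
    have h2 : ∀ n, ENNReal.ofReal (a n ^ r)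
        ≤ ⨆ _ : (t n).Nonempty, Metric.ediam (t n) ^ r := by
      intro n
      rcases (t n).eq_empty_or_nonempty with he | hne
      · simp [ha, he, Real.zero_rpow hr.ne']
      · rw [iSup_pos hne, ← ENNReal.ofReal_rpow_of_nonneg (ha0 n) hr.le,
          ENNReal.ofReal_toReal (hfin n)]
    have h3 := ((Finset.sum_le_sum fun n _ => h2 n).trans (ENNReal.sum_le_tsum G)).trans hsum.le
    rw [← ENNReal.ofReal_sum_of_nonneg fun n _ => Real.rpow_nonneg (ha0 n) r] at h3
    exact (ENNReal.ofReal_le_ofReal_iff hε0.le).1 h3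
  -- thicken the diameters so that every scale is positive
  set η : ℕ → ℝ := fun n => min (1 / 4) ((ε * (1 / 2) ^ (n + 1)) ^ (1 / r)) with hη
  have hη0 : ∀ n, 0 < η n := fun n => lt_min (by norm_num) (by positivity)
  have hηr : ∀ n, η n ^ r ≤ ε * (1 / 2) ^ (n + 1) := by
    intro n
    calc η n ^ r ≤ ((ε * (1 / 2) ^ (n + 1)) ^ (1 / r)) ^ r :=
          Real.rpow_le_rpow (hη0 n).le (min_le_right _ _) hr.le
      _ = ε * (1 / 2) ^ (n + 1) := by
          rw [← Real.rpow_mul (by positivity), one_div_mul_cancel hr.ne', Real.rpow_one]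
  have hηsum : ∀ G : Finset ℕ, ∑ n ∈ G, η n ^ r ≤ ε := by
    intro G
    have h2 : HasSum (fun n : ℕ => ε * (1 / 2) ^ (n + 1)) ε := by
      have h := hasSum_geometric_two' ε
      have e : (fun n : ℕ => ε * (1 / 2) ^ (n + 1)) = fun n : ℕ => ε / 2 / 2 ^ n := by
        funext n
        rw [one_div, inv_pow, pow_succ]
        field_simp
      rwa [e]
    exact (Finset.sum_le_sum fun n _ => hηr n).trans
      (sum_le_hasSum G (fun n _ => by positivity) h2)
  set D : ℕ → ℝ := fun n => a n + η n with hD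
  have hD0 : ∀ n, 0 < D n := fun n => add_pos_of_nonneg_of_pos (ha0 n) (hη0 n)
  have hD1 : ∀ n, D n < 1 := fun n => by
    have h1 := ha4 n
    have h2 : η n ≤ 1 / 4 := min_le_left _ _
    simp only [hD]; linarith
  have hDr : ∀ n, D n ^ r ≤ 2 ^ r * (a n ^ r + η n ^ r) := by
    intro n
    have h1 : D n ≤ 2 * max (a n) (η n) := by
      simp only [hD]
      linarith [le_max_left (a n) (η n), le_max_right (a n) (η n)]
    have h2 : max (a n) (η n) ^ r ≤ a n ^ r + η n ^ r := by
      have e1 := Real.rpow_nonneg (ha0 n) r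
      have e2 := Real.rpow_nonneg (hη0 n).le r
      rcases max_choice (a n) (η n) with h | h <;> rw [h] <;> linarith
    calc D n ^ r ≤ (2 * max (a n) (η n)) ^ r := Real.rpow_le_rpow (hD0 n).le h1 hr.le
      _ = 2 ^ r * max (a n) (η n) ^ r :=
          Real.mul_rpow (by norm_num) ((ha0 n).trans (le_max_left _ _))
      _ ≤ _ := by gcongr
  have htd : ∀ n, ∀ y ∈ t n, ∀ z ∈ t n, dist y z ≤ D n := by
    intro n y hy z hz
    have h1 := Metric.edist_le_ediam_of_mem hy hz
    have h2 : dist y z ≤ a n := by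
      rw [dist_edist]; exact toReal_mono (hfin n) h1
    have := hη0 n
    simp only [hD]; linarith
  set C : Set (List (Fin N)) :=
    {c | ∃ n, c ∈ cutWords lam (D n) ∧ ∃ x, pre x c.length = c ∧ π x ∈ t n} with hC
  obtain ⟨x, hxA, hx⟩ := hA C fun F hF => by
    have hex : ∀ c, ∃ n, c ∈ F → c ∈ cutWords lam (D n) ∧ ∃ x, pre x c.length = c ∧ π x ∈ t n := by
      intro c
      by_cases hc : c ∈ F
      · obtain ⟨n, hn⟩ := hF hc
        exact ⟨n, fun _ => hn⟩
      · exact ⟨0, fun h => absurd h hc⟩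
    choose g hg using hex
    calc ∑ c ∈ F, wt lam c ^ r
        = ∑ n ∈ F.image g, ∑ c ∈ F.filter (fun c => g c = n), wt lam c ^ r :=
          (Finset.sum_fiberwise_of_maps_to (fun c hc => Finset.mem_image_of_mem g hc) _).symm
      _ ≤ ∑ n ∈ F.image g, M * (2 ^ r * (a n ^ r + η n ^ r)) := by
          refine Finset.sum_le_sum fun n _ => ?_
          have h2 : ∀ c ∈ F.filter (fun c => g c = n), wt lam c ^ r ≤ D n ^ r := by
            intro c hc
            obtain ⟨hcF, hgc⟩ := Finset.mem_filter.1 hc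
            have := (hg c hcF).1.1
            rw [hgc] at this
            exact Real.rpow_le_rpow (wt_pos hlp c).le this hr.le
          have h3 : (F.filter (fun c => g c = n)).card ≤ M := by
            refine hM (D n) (t n) (hD0 n) (hD1 n) (htd n) _ fun c hc => ?_
            obtain ⟨hcF, hgc⟩ := Finset.mem_filter.1 hc
            rw [← hgc]
            exact hg c hcF
          have h3' : ((F.filter (fun c => g c = n)).card : ℝ) ≤ M := by exact_mod_cast h3
          refine (Finset.sum_le_sum h2).trans ?_
          rw [Finset.sum_const, nsmul_eq_mul]
          exact mul_le_mul h3' (hDr n) (Real.rpow_nonneg (hD0 n).le r) (Nat.cast_nonneg M)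
      _ = M * 2 ^ r * (∑ n ∈ F.image g, a n ^ r + ∑ n ∈ F.image g, η n ^ r) := by
          rw [← Finset.sum_add_distrib, Finset.mul_sum]
          exact Finset.sum_congr rfl fun n _ => by ring
      _ ≤ (M + 1) * 2 ^ r * (ε + ε) := by
          have e1 := hasum (F.image g)
          have e2 := hηsum (F.image g)
          have e3 : 0 ≤ ∑ n ∈ F.image g, a n ^ r + ∑ n ∈ F.image g, η n ^ r :=
            add_nonneg (Finset.sum_nonneg fun n _ => Real.rpow_nonneg (ha0 n) r)
              (Finset.sum_nonneg fun n _ => Real.rpow_nonneg (hη0 n).le r)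
          gcongr
          linarith
      _ = δ := by rw [hε]; field_simp; ring
  obtain ⟨n, hn⟩ := mem_iUnion.1 (hcov (mem_image_of_mem π hxA))
  obtain ⟨m, hm⟩ := exists_cut hlam (hD0 n) x
  exact hx (pre x m) ⟨n, hm, x, by simp, hn⟩ (by simp)

end DynCover

namespace DynCover

/-! ### The upper bound -/

variable {N d : ℕ}

/-- The event that the word `w` occurs in the sequence at some position `n ≤ exp (a m)`, where
`m` is the length of `w`. -/
def seen (a : ℝ) {m : ℕ} (w : Fin m → Fin N) : Set (ℕ → Fin N) :=
  ⋃ n ∈ Finset.range (⌊Real.exp (a * m)⌋₊ + 1), {o | pre (sh n o) m = List.ofFn w}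

lemma measurableSet_seen (a : ℝ) {m : ℕ} (w : Fin m → Fin N) : MeasurableSet (seen a w) :=
  Finset.measurableSet_biUnion _ fun n _ => measurable_pre_sh n m _

/-- A probability is at most `1`, and a union bound over the positions gives `2 e^(am) p_w`; the
minimum of the two is at most `2 (e^(am) p_w)^q` for every `q ∈ [0,1]`. -/
lemma measure_seen_le [NeZero N] {p : Fin N → ℝ} (hp : ∀ i, 0 < p i) (hpsum : ∑ i, p i = 1)
    {μ : Measure (ℕ → Fin N)} [IsProbabilityMeasure μ]
    (hμ : ∀ (m : ℕ) (w : Fin m → Fin N),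
      μ (_root_.cylinder w) = ENNReal.ofReal (wordProd p w))
    {a q : ℝ} (ha : 0 < a) (hq : q ∈ Set.Icc (0 : ℝ) 1) {m : ℕ} (w : Fin m → Fin N) :
    μ (seen a w) ≤ ENNReal.ofReal (2 * (Real.exp (a * m) * wordProd p w) ^ q) := by
  set X := Real.exp (a * m) with hX
  have hX1 : 1 ≤ X := Real.one_le_exp (by positivity)
  have hw : 0 < wordProd p w := by rw [wordProd_eq]; exact wt_pos hp _
  have hXw : 0 < X * wordProd p w := by positivity
  rcases le_or_gt 1 (X * wordProd p w) with h | h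
  · refine prob_le_one.trans ?_
    rw [ENNReal.one_le_ofReal]
    have := Real.one_le_rpow h hq.1
    linarith
  · have hwin : ∀ n, μ {o | pre (sh n o) m = List.ofFn w} = ENNReal.ofReal (wordProd p w) := by
      intro n
      have := measure_window hp hpsum hμ n (List.ofFn w)
      rwa [List.length_ofFn, ← wordProd_eq] at this
    calc μ (seen a w)
        ≤ ∑ n ∈ Finset.range (⌊X⌋₊ + 1), μ {o | pre (sh n o) m = List.ofFn w} :=
          measure_biUnion_finset_le _ _
      _ = ENNReal.ofReal ((⌊X⌋₊ + 1 : ℕ) * wordProd p w) := by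
          rw [Finset.sum_congr rfl fun n _ => hwin n, Finset.sum_const, Finset.card_range,
            nsmul_eq_mul, ENNReal.ofReal_mul (by positivity), ENNReal.ofReal_natCast]
      _ ≤ _ := by
          refine ENNReal.ofReal_le_ofReal ?_
          have h1 : ((⌊X⌋₊ + 1 : ℕ) : ℝ) ≤ 2 * X := by
            have := Nat.floor_le (zero_le_one.trans hX1)
            push_cast; linarith
          have h2 : X * wordProd p w ≤ (X * wordProd p w) ^ q := by
            have := Real.rpow_le_rpow_of_exponent_ge hXw h.le hq.2
            rwa [Real.rpow_one] at this
          calc ((⌊X⌋₊ + 1 : ℕ) : ℝ) * wordProd p w ≤ 2 * X * wordProd p w := by gcongr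
            _ = 2 * (X * wordProd p w) := by ring
            _ ≤ _ := by gcongr

lemma sum_weights {lam p : Fin N → ℝ} (hlam : ∀ i, 0 < lam i) (hp : ∀ i, 0 < p i)
    (a s q : ℝ) (m : ℕ) :
    ∑ w : Fin m → Fin N, wordProd lam w ^ s * (2 * (Real.exp (a * m) * wordProd p w) ^ q)
      = 2 * (∑ i, lam i ^ s * (p i * Real.exp a) ^ q) ^ m := by
  rw [Fintype.sum_pow, Finset.mul_sum]
  refine Finset.sum_congr rfl fun w _ => ?_
  have h1 : Real.exp (a * m) * wordProd p w = ∏ j, (p (w j) * Real.exp a) := by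
    rw [Finset.prod_mul_distrib, Finset.prod_const, Finset.card_univ, Fintype.card_fin,
      ← Real.exp_nat_mul, wordProd]
    ring_nf
  rw [h1, wordProd, ← Real.finsetProd_rpow _ _ (fun j _ => (hlam (w j)).le),
    ← Real.finsetProd_rpow _ _ (fun j _ => (mul_pos (hp (w j)) (Real.exp_pos a)).le),
    Finset.prod_mul_distrib (f := fun j => lam (w j) ^ s)]
  ring

/-- The total `s`-dimensional size of all words `w` occurring before time `exp (a |w|)` is almost
surely finite, having finite expectation. -/
lemma ae_tsum_seen_lt_top [NeZero N] {lam p : Fin N → ℝ} (hlam : ∀ i, 0 < lam i)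
    (hp : ∀ i, 0 < p i) (hpsum : ∑ i, p i = 1)
    {μ : Measure (ℕ → Fin N)} [IsProbabilityMeasure μ]
    (hμ : ∀ (m : ℕ) (w : Fin m → Fin N),
      μ (_root_.cylinder w) = ENNReal.ofReal (wordProd p w))
    {a q s : ℝ} (ha : 0 < a) (hq : q ∈ Set.Icc (0 : ℝ) 1)
    (hG : ∑ i, lam i ^ s * (p i * Real.exp a) ^ q < 1) :
    ∀ᵐ o ∂μ, ∑' i : (Σ m : ℕ, (Fin m → Fin N)),
      (seen a i.2).indicator (fun _ => ENNReal.ofReal (wordProd lam i.2 ^ s)) o < ∞ := by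
  set G := ∑ i, lam i ^ s * (p i * Real.exp a) ^ q with hGdef
  have hG0 : 0 ≤ G := Finset.sum_nonneg fun i _ =>
    mul_nonneg (Real.rpow_nonneg (hlam i).le _)
      (Real.rpow_nonneg (mul_pos (hp i) (Real.exp_pos a)).le _)
  have hmeas : ∀ i : (Σ m : ℕ, (Fin m → Fin N)), Measurable
      ((seen a i.2).indicator (fun _ => ENNReal.ofReal (wordProd lam i.2 ^ s))) := fun i =>
    measurable_const.indicator (measurableSet_seen a i.2)
  refine ae_lt_top (Measurable.tsum hmeas) (ne_of_lt ?_)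
  rw [lintegral_tsum fun i => (hmeas i).aemeasurable, ENNReal.tsum_sigma']
  have hterm : ∀ m : ℕ, ∑' w : Fin m → Fin N, ∫⁻ o,
      (seen a w).indicator (fun _ => ENNReal.ofReal (wordProd lam w ^ s)) o ∂μ
      ≤ ENNReal.ofReal 2 * ENNReal.ofReal G ^ m := by
    intro m
    rw [tsum_fintype, ← ENNReal.ofReal_pow hG0, ← ENNReal.ofReal_mul (by norm_num), hGdef,
      ← sum_weights hlam hp, ENNReal.ofReal_sum_of_nonneg]
    · refine Finset.sum_le_sum fun w _ => ?_
      rw [lintegral_indicator_const (measurableSet_seen a w), ENNReal.ofReal_mul]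
      · gcongr
        exact measure_seen_le hp hpsum hμ ha hq w
      · rw [wordProd_eq]
        exact Real.rpow_nonneg (wt_pos hlam _).le _
    · intro w _
      rw [wordProd_eq, wordProd_eq]
      have h1 := (wt_pos hlam (List.ofFn w)).le
      have h2 := (wt_pos hp (List.ofFn w)).le
      positivity
  refine (ENNReal.tsum_le_tsum hterm).trans_lt ?_
  rw [ENNReal.tsum_mul_left, ENNReal.tsum_geometric]
  refine ENNReal.mul_lt_top ofReal_lt_top ?_
  rw [lt_top_iff_ne_top, Ne, ENNReal.inv_eq_top, tsub_eq_zero_iff_le, not_le]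
  exact ENNReal.ofReal_lt_one.2 hG

/-- Covering the limsup set by the cylinders of the words seen early enough. -/
lemma hausdorffMeasure_ne_top [NeZero N] {lam : Fin N → ℝ}
    (hlam : ∀ i, lam i ∈ Set.Ioo (0 : ℝ) 1)
    {f : Fin N → EuclideanSpace ℝ (Fin d) → EuclideanSpace ℝ (Fin d)}
    (hf : ∀ i x y, dist (f i x) (f i y) = lam i * dist x y)
    {K : Set (EuclideanSpace ℝ (Fin d))}
    (hKne : K.Nonempty) (hKc : IsCompact K) (hK : K = ⋃ i, f i '' K)
    {π : (ℕ → Fin N) → EuclideanSpace ℝ (Fin d)}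
    (hπ : ∀ x, Filter.Tendsto (fun n => prefixMap f x n 0) Filter.atTop (nhds (π x)))
    {α a : ℝ} (hα : 0 < α) (hαa : α < a) {ℓ : ℕ → ℕ}
    (hℓ : Filter.liminf (fun n : ℕ => (ℓ n : ℝ) / Real.log n) Filter.atTop = 1 / α)
    {s : ℝ} (hs : 0 < s) {o : ℕ → Fin N}
    (ho : ∑' i : (Σ m : ℕ, (Fin m → Fin N)),
      (seen a i.2).indicator (fun _ => ENNReal.ofReal (wordProd lam i.2 ^ s)) o < ∞) :
    μH[s] (π '' limsupCylinders ℓ o) ≠ ∞ := by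
  classical
  have ha : 0 < a := hα.trans hαa
  have hlp : ∀ i, 0 < lam i := fun i => (hlam i).1
  obtain ⟨D, hD⟩ := Metric.isBounded_iff.1 hKc.isBounded
  have hD0 : 0 ≤ D := by
    obtain ⟨u, hu⟩ := hKne
    exact dist_nonneg.trans (hD hu hu)
  obtain ⟨i₁, hi₁⟩ := Finite.exists_max lam
  set t : ℕ → (Σ m : ℕ, (Fin m → Fin N)) → Set (EuclideanSpace ℝ (Fin d)) := fun k i =>
    if k ≤ i.1 ∧ o ∈ seen a i.2 then π '' {x | pre x i.1 = List.ofFn i.2} else ∅ with ht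
  have hdiam : ∀ i : (Σ m : ℕ, (Fin m → Fin N)),
      Metric.ediam (π '' {x | pre x i.1 = List.ofFn i.2})
        ≤ ENNReal.ofReal (wordProd lam i.2 * D) := by
    rintro ⟨m, w⟩
    refine Metric.ediam_le_of_forall_dist_le ?_
    rintro _ ⟨x, hx, rfl⟩ _ ⟨y, hy, rfl⟩
    have hx' : pre x m = List.ofFn w := hx
    have hy' : pre y m = List.ofFn w := hy
    rw [coding_eq hf hπ x m, coding_eq hf hπ y m, hx', hy', dist_wmap hf, wordProd_eq]
    exact mul_le_mul_of_nonneg_left (hD (coding_mem hlam hf hπ hKne hKc hK _)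
      (coding_mem hlam hf hπ hKne hKc hK _)) (wt_pos hlp _).le
  have hr : Tendsto (fun k : ℕ => ENNReal.ofReal (lam i₁ ^ k * D)) atTop (𝓝 0) := by
    have h1 : Tendsto (fun k : ℕ => lam i₁ ^ k * D) atTop (𝓝 (0 * D)) :=
      (tendsto_pow_atTop_nhds_zero_of_lt_one (hlam i₁).1.le (hlam i₁).2).mul_const _
    rw [zero_mul] at h1
    have := ENNReal.tendsto_ofReal h1
    rwa [ENNReal.ofReal_zero] at this
  have hle := Measure.hausdorffMeasure_le_liminf_tsum s (π '' limsupCylinders ℓ o)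
    (fun k : ℕ => ENNReal.ofReal (lam i₁ ^ k * D)) hr t
    (Eventually.of_forall fun k i => by
      simp only [ht]
      split_ifs with h
      · refine (hdiam i).trans (ENNReal.ofReal_le_ofReal ?_)
        refine mul_le_mul_of_nonneg_right ?_ hD0
        have h1 := wt_le_pow hlp hi₁ (List.ofFn i.2)
        rw [List.length_ofFn] at h1
        rw [wordProd_eq]
        exact h1.trans (pow_le_pow_of_le_one (hlp i₁).le (hlam i₁).2.le h.1)
      · simp)
    (Eventually.of_forall fun k => by
      rintro _ ⟨x, hx, rfl⟩
      have hev := eventually_ratio_gt (ℓ := ℓ) (b := 1 / a) (by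
        rw [hℓ]; exact one_div_lt_one_div_of_lt hα hαa)
      have hlog : Tendsto (fun n : ℕ => Real.log n) atTop atTop :=
        Real.tendsto_log_atTop.comp tendsto_natCast_atTop_atTop
      obtain ⟨n₀, hn₀⟩ := eventually_atTop.1
        ((hev.and (hlog.eventually_gt_atTop (a * k))).and (eventually_ge_atTop 1))
      obtain ⟨n, hn, hxn⟩ := mem_limsup_iff.1 hx n₀
      obtain ⟨⟨h1, h2⟩, h3⟩ := hn₀ n hn
      have hlogpos : 0 < Real.log n := lt_of_le_of_lt (by positivity) h2
      have h4 : Real.log n < a * ℓ n := by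
        rw [div_lt_div_iff₀ ha hlogpos] at h1
        linarith
      have hkl : k ≤ ℓ n := by
        have : a * k < a * ℓ n := h2.trans h4
        exact_mod_cast (lt_of_mul_lt_mul_left this ha.le).le
      have hnle : n ≤ ⌊Real.exp (a * ℓ n)⌋₊ := by
        refine Nat.le_floor ?_
        have hn0 : (0 : ℝ) < n := by exact_mod_cast h3
        rw [← Real.exp_log hn0]
        exact Real.exp_le_exp.2 h4.le
      set w : Fin (ℓ n) → Fin N := fun j => sh n o j with hw
      have hofn : List.ofFn w = pre (sh n o) (ℓ n) := by
        refine List.ext_getElem (by simp) fun j hj hj' => by simp [hw, pre]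
      refine mem_iUnion.2 ⟨⟨ℓ n, w⟩, ?_⟩
      have hseen : o ∈ seen a w :=
        mem_iUnion₂.2 ⟨n, Finset.mem_range.2 (by omega), hofn.symm⟩
      simp only [ht]
      rw [if_pos ⟨hkl, hseen⟩]
      exact ⟨x, by rw [mem_ofPred_eq, hofn]; exact hxn, rfl⟩)
  have hbound : ∀ k, ∑' i, Metric.ediam (t k i) ^ s ≤ ENNReal.ofReal (D ^ s) *
      ∑' i : (Σ m : ℕ, (Fin m → Fin N)),
        (seen a i.2).indicator (fun _ => ENNReal.ofReal (wordProd lam i.2 ^ s)) o := by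
    intro k
    rw [← ENNReal.tsum_mul_left]
    refine ENNReal.tsum_le_tsum fun i => ?_
    simp only [ht]
    split_ifs with h
    · rw [indicator_of_mem h.2]
      refine (ENNReal.rpow_le_rpow (hdiam i) hs.le).trans ?_
      have hw : 0 ≤ wordProd lam i.2 := by rw [wordProd_eq]; exact (wt_pos hlp _).le
      rw [ENNReal.ofReal_rpow_of_nonneg (mul_nonneg hw hD0) hs.le, Real.mul_rpow hw hD0,
        mul_comm, ENNReal.ofReal_mul (Real.rpow_nonneg hD0 s)]
    · simp [ENNReal.zero_rpow_of_pos hs]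
  have hlim := (liminf_le_liminf (Eventually.of_forall hbound)).trans_eq
    (liminf_const (f := (atTop : Filter ℕ)) _)
  exact ((hle.trans hlim).trans_lt (ENNReal.mul_lt_top ofReal_lt_top ho)).ne

lemma ae_dimH_le [NeZero N] {lam p : Fin N → ℝ} (hlam : ∀ i, lam i ∈ Set.Ioo (0 : ℝ) 1)
    (hp : ∀ i, 0 < p i) (hpsum : ∑ i, p i = 1)
    {f : Fin N → EuclideanSpace ℝ (Fin d) → EuclideanSpace ℝ (Fin d)}
    (hf : ∀ i x y, dist (f i x) (f i y) = lam i * dist x y)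
    {K : Set (EuclideanSpace ℝ (Fin d))}
    (hKne : K.Nonempty) (hKc : IsCompact K) (hK : K = ⋃ i, f i '' K)
    {π : (ℕ → Fin N) → EuclideanSpace ℝ (Fin d)}
    (hπ : ∀ x, Filter.Tendsto (fun n => prefixMap f x n 0) Filter.atTop (nhds (π x)))
    {μ : Measure (ℕ → Fin N)} [IsProbabilityMeasure μ]
    (hμ : ∀ (m : ℕ) (w : Fin m → Fin N),
      μ (_root_.cylinder w) = ENNReal.ofReal (wordProd p w))
    {α : ℝ} (hα : 0 < α) {ℓ : ℕ → ℕ}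
    (hℓ : Filter.liminf (fun n : ℕ => (ℓ n : ℝ) / Real.log n) Filter.atTop = 1 / α)
    {q s : ℝ} (hq : q ∈ Set.Icc (0 : ℝ) 1) (hs : 0 < s)
    (H : ∑ i, lam i ^ s * (p i * Real.exp α) ^ q < 1) :
    ∀ᵐ o ∂μ, dimH (π '' limsupCylinders ℓ o) ≤ ENNReal.ofReal s := by
  have hcont : Continuous fun a : ℝ => ∑ i, lam i ^ s * (p i * Real.exp a) ^ q := by
    refine continuous_finsetSum _ fun i _ => continuous_const.mul ?_
    exact (continuous_const.mul Real.continuous_exp).rpow_const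
      fun a => Or.inl (mul_pos (hp i) (Real.exp_pos a)).ne'
  have hev : ∀ᶠ a in 𝓝[>] α, ∑ i, lam i ^ s * (p i * Real.exp a) ^ q < 1 :=
    (hcont.continuousAt.eventually_lt continuousAt_const H).filter_mono nhdsWithin_le_nhds
  obtain ⟨a, haG, hαa⟩ := (hev.and self_mem_nhdsWithin).exists
  filter_upwards [ae_tsum_seen_lt_top (fun i => (hlam i).1) hp hpsum hμ (hα.trans hαa) hq haG]
    with o ho
  have h := hausdorffMeasure_ne_top hlam hf hKne hKc hK hπ hα hαa hℓ hs ho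
  rw [← Real.coe_toNNReal s hs.le] at h
  exact dimH_le_of_hausdorffMeasure_ne_top h

/-! ### Properties of the pressure -/

lemma sum_lt_sum_of_exponent {lam c : Fin N → ℝ} [NeZero N]
    (hlam : ∀ i, lam i ∈ Set.Ioo (0 : ℝ) 1) (hc : ∀ i, 0 < c i) {s t : ℝ} (hst : s < t) :
    ∑ i, lam i ^ t * c i < ∑ i, lam i ^ s * c i :=
  Finset.sum_lt_sum_of_nonempty Finset.univ_nonempty fun i _ =>
    mul_lt_mul_of_pos_right
      (Real.rpow_lt_rpow_of_exponent_gt (hlam i).1 (hlam i).2 hst) (hc i)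

lemma one_lt_sum_rpow {p : Fin N → ℝ} [NeZero N] (hN : 2 ≤ N) (hp : ∀ i, 0 < p i)
    (hpsum : ∑ i, p i = 1) {α q : ℝ} (hα : 0 < α) (hq : q ∈ Set.Icc (0 : ℝ) 1) :
    1 < ∑ i, (p i * Real.exp α) ^ q := by
  rcases hq.1.eq_or_lt with rfl | hq0
  · simp only [Real.rpow_zero, Finset.sum_const, Finset.card_univ, Fintype.card_fin,
      nsmul_eq_mul, mul_one]
    exact_mod_cast hN
  · rw [← hpsum]
    refine Finset.sum_lt_sum_of_nonempty Finset.univ_nonempty fun i _ => ?_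
    have hp1 : p i ≤ 1 := by
      rw [← hpsum]
      exact Finset.single_le_sum (fun j _ => (hp j).le) (Finset.mem_univ i)
    have h1 : p i ≤ p i ^ q := by
      have := Real.rpow_le_rpow_of_exponent_ge (hp i) hp1 hq.2
      rwa [Real.rpow_one] at this
    have h2 : 1 < Real.exp α ^ q := Real.one_lt_rpow (Real.one_lt_exp_iff.2 hα) hq0
    rw [Real.mul_rpow (hp i).le (Real.exp_pos α).le]
    calc p i ≤ p i ^ q := h1
      _ < p i ^ q * Real.exp α ^ q :=
        lt_mul_of_one_lt_right (Real.rpow_pos_of_pos (hp i) q) h2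

end DynCover

/-- Main theorem (dimension formula for the dynamical covering set):
`dim_H R(ō,ℓ) = inf_(q ∈ [0,1]) P_α(q)` for `ℙ_p`-a.e. `ō`. -/
theorem dimH_coverSet {N d : ℕ} [NeZero N] (hN : 2 ≤ N)
    (lam p : Fin N → ℝ)
    (hlam : ∀ i, lam i ∈ Set.Ioo (0 : ℝ) 1)
    (hp : ∀ i, 0 < p i) (hpsum : ∑ i, p i = 1)
    (f : Fin N → EuclideanSpace ℝ (Fin d) → EuclideanSpace ℝ (Fin d))
    (hf : ∀ i x y, dist (f i x) (f i y) = lam i * dist x y)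
    (Λ : Set (EuclideanSpace ℝ (Fin d)))
    (hΛne : Λ.Nonempty) (hΛc : IsCompact Λ) (hΛ : Λ = ⋃ i, f i '' Λ)
    (U : Set (EuclideanSpace ℝ (Fin d)))
    (hUne : U.Nonempty) (hUo : IsOpen U) (hUb : Bornology.IsBounded U)
    (hUsub : ∀ i, f i '' U ⊆ U)
    (hUdisj : Pairwise fun i j => Disjoint (f i '' U) (f j '' U))
    (π : (ℕ → Fin N) → EuclideanSpace ℝ (Fin d))
    (hπ : ∀ x, Filter.Tendsto (fun n => prefixMap f x n 0) Filter.atTop (nhds (π x)))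
    (μ : Measure (ℕ → Fin N)) [IsProbabilityMeasure μ]
    (hμ : ∀ (m : ℕ) (w : Fin m → Fin N), μ (cylinder w) = ENNReal.ofReal (wordProd p w))
    (α : ℝ) (hα : 0 < α)
    (ℓ : ℕ → ℕ) (hℓmono : Monotone ℓ)
    (hℓ : Filter.liminf (fun n : ℕ => (ℓ n : ℝ) / Real.log n) Filter.atTop = 1 / α)
    (P : ℝ → ℝ)
    (hP : ∀ q : ℝ, ∑ i, lam i ^ P q * (p i * Real.exp α) ^ q = 1) :
    ∀ᵐ o ∂μ, dimH (π '' limsupCylinders ℓ o)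
      = ENNReal.ofReal (sInf (P '' Set.Icc 0 1)) := by
  set I := sInf (P '' Set.Icc 0 1) with hI
  have hc : ∀ (q : ℝ) i, 0 < (p i * Real.exp α) ^ q := fun q i =>
    Real.rpow_pos_of_pos (mul_pos (hp i) (Real.exp_pos α)) q
  have hPpos : ∀ q ∈ Set.Icc (0 : ℝ) 1, 0 < P q := by
    intro q hq
    by_contra hcon
    have h1 := DynCover.one_lt_sum_rpow hN hp hpsum hα hq
    have h2 : ∑ i, (p i * Real.exp α) ^ q ≤ ∑ i, lam i ^ P q * (p i * Real.exp α) ^ q :=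
      Finset.sum_le_sum fun i _ => le_mul_of_one_le_left (hc q i).le
        (Real.one_le_rpow_of_pos_of_le_one_of_nonpos (hlam i).1 (hlam i).2.le (not_lt.1 hcon))
    rw [hP q] at h2
    linarith
  have hne : (P '' Set.Icc 0 1).Nonempty := (nonempty_Icc.2 zero_le_one).image P
  have hbdd : BddBelow (P '' Set.Icc 0 1) :=
    ⟨0, by rintro _ ⟨q, hq, rfl⟩; exact (hPpos q hq).le⟩
  have hI0 : 0 ≤ I := le_csInf hne (by rintro _ ⟨q, hq, rfl⟩; exact (hPpos q hq).le)
  obtain ⟨M, hM⟩ := DynCover.exists_cut_card_le hlam hf hΛne hΛc hΛ hUne hUo hUb hUsub hUdisj hπ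
  have hlow : ∀ r : ℚ, ∀ᵐ o ∂μ, 0 < (r : ℝ) → (r : ℝ) < I →
      ENNReal.ofReal r ≤ dimH (π '' limsupCylinders ℓ o) := by
    intro r
    by_cases hr : 0 < (r : ℝ) ∧ (r : ℝ) < I
    · obtain ⟨s, hrs, hsI⟩ := exists_between hr.2
      obtain ⟨δ, hδ, hae⟩ := DynCover.ae_not_covered hlam hp hpsum hμ hα hℓmono hℓ hr.1 hrs
        (fun q hq => by
          rw [← hP q]
          exact DynCover.sum_lt_sum_of_exponent hlam (hc q)
            (hsI.trans_le (csInf_le hbdd (mem_image_of_mem P hq))))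
      filter_upwards [hae] with o ho _ _
      have h := DynCover.hausdorffMeasure_ne_zero hlam hM hr.1 hδ ho
      rw [← Real.coe_toNNReal (r : ℝ) hr.1.le] at h
      exact le_dimH_of_hausdorffMeasure_ne_zero h
    · exact Eventually.of_forall fun o h1 h2 => absurd ⟨h1, h2⟩ hr
  have hup : ∀ s : ℚ, ∀ᵐ o ∂μ, I < (s : ℝ) →
      dimH (π '' limsupCylinders ℓ o) ≤ ENNReal.ofReal s := by
    intro s
    by_cases hs : I < (s : ℝ)
    · obtain ⟨_, ⟨q, hq, rfl⟩, hqs⟩ := exists_lt_of_csInf_lt hne hs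
      filter_upwards [DynCover.ae_dimH_le hlam hp hpsum hf hΛne hΛc hΛ hπ hμ hα hℓ hq
        (hI0.trans_lt hs) (by
          rw [← hP q]
          exact DynCover.sum_lt_sum_of_exponent hlam (hc q) hqs)] with o ho _ using ho
    · exact Eventually.of_forall fun o h => absurd h hs
  filter_upwards [ae_all_iff.2 hlow, ae_all_iff.2 hup] with o h1 h2
  refine le_antisymm (le_of_forall_gt_imp_ge_of_dense fun b hb => ?_)
    (le_of_forall_lt_imp_le_of_dense fun b hb => ?_)
  · rcases eq_or_ne b ∞ with rfl | hbt
    · exact le_top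
    · obtain ⟨s, hs1, hs2⟩ := exists_rat_btwn ((ENNReal.ofReal_lt_iff_lt_toReal hI0 hbt).1 hb)
      exact (h2 s hs1).trans (ENNReal.ofReal_le_of_le_toReal hs2.le)
  · have hbt : b ≠ ∞ := (hb.trans ofReal_lt_top).ne
    obtain ⟨r, hr1, hr2⟩ := exists_rat_btwn ((ENNReal.lt_ofReal_iff_toReal_lt hbt).1 hb)
    exact ((ENNReal.le_ofReal_iff_toReal_le hbt (toReal_nonneg.trans hr1.le)).2 hr1.le).trans
      (h1 r (toReal_nonneg.trans_lt hr1) hr2)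
end
end

section
/- Let Φ = {f_1,…,f_N} be an iterated function system of contracting similarities on ℝ^d with attractor Λ, let p be a probability vector with all p_i > 0, let α > −log p_min, and let ℓ : ℕ → ℕ be monotone increasing with liminf_{n→∞} ℓ(n)/log n = 1/α. Then for ℙ_p-almost every ō ∈ Σ, the dynamical covering set satisfies R(ō,ℓ) = Λ. -/
/-!
Almost surely `limsupCylinders ℓ o` is the whole symbolic space, and the coding map sends the
symbolic space onto `Λ` (`range_coding_eq`).

For the first claim write `q = min p` and `c = -log q`, so `c < α`. Choosing `β` with
`1/α < β` and `θ = c * β < 1`, there are arbitrarily large `n` with `M = ℓ n < β log n`. A word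
`w` of length `M` has mass at least `q ^ M ≥ n ^ (-θ)`, and by independence of disjoint blocks
(`measureReal_inter_block`) it is missed by `T` consecutive blocks of `o` with probability at most
`exp (-T n ^ (-θ))`. There are at most `q ^ (-M) ≤ n ^ θ` words of length `M`, and about
`T ≈ n ^ ((1+θ)/2)` blocks fit into the positions between a fixed `k` and `n`; hence the
probability that some word of length `M` is missed there is at most `n ^ θ exp (1 - n ^ ((1-θ)/2))`,
which tends to `0`. Whenever no word is missed, every `x` agrees with some `σ^m o`, `k ≤ m ≤ n`, on
`ℓ n ≥ ℓ m` symbols, by monotonicity of `ℓ`.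
-/

open MeasureTheory Filter Topology Set ENNReal

noncomputable section

/-! ### The coding map is onto the attractor -/

lemma dist_prefixMap_le {N : ℕ} {E : Type*} [PseudoMetricSpace E] (f : Fin N → E → E)
    (lam : Fin N → ℝ) (r : ℝ) (hr0 : 0 ≤ r) (hr : ∀ i, lam i ≤ r)
    (hf : ∀ i x y, dist (f i x) (f i y) = lam i * dist x y) (n : ℕ) :
    ∀ (x : ℕ → Fin N) (a b : E),
      dist (prefixMap f x n a) (prefixMap f x n b) ≤ r ^ n * dist a b := by
  induction n with
  | zero => intro x a b; simp [prefixMap]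
  | succ n ih =>
    intro x a b
    simp only [prefixMap, hf]
    calc _ ≤ r * (r ^ n * dist a b) :=
          mul_le_mul (hr _) (ih _ _ _) dist_nonneg hr0
      _ = _ := by ring

lemma prefixMap_mem {N : ℕ} {E : Type*} (f : Fin N → E → E) (Λ : Set E)
    (hΛ : Λ = ⋃ i, f i '' Λ) (n : ℕ) :
    ∀ (x : ℕ → Fin N) (a : E), a ∈ Λ → prefixMap f x n a ∈ Λ := by
  induction n with
  | zero => intro x a h; simpa [prefixMap] using h
  | succ n ih =>
    intro x a h
    rw [hΛ]
    exact mem_iUnion.2 ⟨x 0, mem_image_of_mem _ (ih _ a h)⟩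

lemma range_coding_eq {N : ℕ} {E : Type*} [MetricSpace E] [Zero E] [NeZero N]
    (lam : Fin N → ℝ) (hlam : ∀ i, lam i ∈ Set.Ioo (0 : ℝ) 1) (f : Fin N → E → E)
    (hf : ∀ i x y, dist (f i x) (f i y) = lam i * dist x y)
    (Λ : Set E) (hΛne : Λ.Nonempty) (hΛc : IsCompact Λ) (hΛ : Λ = ⋃ i, f i '' Λ)
    (π : (ℕ → Fin N) → E)
    (hπ : ∀ x, Tendsto (fun n => prefixMap f x n 0) atTop (nhds (π x))) :
    range π = Λ := by
  obtain ⟨i₀, hi₀⟩ := Finite.exists_max lam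
  have hr0 : 0 ≤ lam i₀ := (hlam i₀).1.le
  have hpow : Tendsto (fun n : ℕ => lam i₀ ^ n) atTop (nhds 0) :=
    tendsto_pow_atTop_nhds_zero_of_lt_one hr0 (hlam i₀).2
  have hd := dist_prefixMap_le f lam (lam i₀) hr0 hi₀ hf
  apply Subset.antisymm
  · rintro _ ⟨x, rfl⟩
    obtain ⟨a, ha⟩ := hΛne
    refine hΛc.isClosed.mem_of_tendsto (b := atTop) (f := fun n => prefixMap f x n a) ?_
      (Eventually.of_forall fun n => prefixMap_mem f Λ hΛ n x a ha)
    refine (hπ x).congr_dist ?_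
    refine squeeze_zero (fun _ => dist_nonneg) (fun n => hd n x 0 a) ?_
    simpa using hpow.mul_const (dist 0 a)
  · intro y hy
    have hstep : ∀ y : Λ, ∃ i, ∃ z : Λ, f i z = y := by
      rintro ⟨y, hy⟩
      rw [hΛ] at hy
      obtain ⟨i, z, hz, rfl⟩ := mem_iUnion.1 hy
      exact ⟨i, ⟨z, hz⟩, rfl⟩
    -- `idx y` and `g y` are a symbol and a preimage with `y = f (idx y) (g y)`;
    -- iterating `g` reads off a code of `y`.
    choose idx g hg using hstep
    have key : ∀ (n : ℕ) (y : Λ), prefixMap f (fun k => idx (g^[k] y)) n (g^[n] y) = y := by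
      intro n
      induction n with
      | zero => intro y; rfl
      | succ n ih =>
        intro y
        have := ih (g y)
        simp only [prefixMap, Function.iterate_succ_apply]
        rw [this]
        exact hg y
    obtain ⟨C, hC⟩ := hΛc.isBounded.subset_closedBall (0 : E)
    refine ⟨fun k => idx (g^[k] ⟨y, hy⟩), ?_⟩
    refine tendsto_nhds_unique (hπ fun k => idx (g^[k] ⟨y, hy⟩)) ?_
    rw [tendsto_iff_dist_tendsto_zero]
    refine squeeze_zero (fun _ => dist_nonneg) (g := fun n => lam i₀ ^ n * C) (fun n => ?_) ?_
    · have h1 := hd n (fun k => idx (g^[k] ⟨y, hy⟩)) 0 (g^[n] ⟨y, hy⟩ : Λ)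
      rw [key n ⟨y, hy⟩] at h1
      refine h1.trans (mul_le_mul_of_nonneg_left ?_ (pow_nonneg hr0 n))
      have := hC (g^[n] ⟨y, hy⟩ : Λ).2
      rwa [Metric.mem_closedBall, dist_comm] at this
    · simpa using hpow.mul_const C

/-! ### Independence of blocks -/

lemma measurableSet_cyl {N m : ℕ} (w : Fin m → Fin N) : MeasurableSet (_root_.cylinder w) := by
  have : _root_.cylinder w = ⋂ j : Fin m, (fun x : ℕ → Fin N => x (j : ℕ)) ⁻¹' {w j} := by
    ext x; simp [_root_.cylinder]
  rw [this]
  exact MeasurableSet.iInter fun j => measurable_pi_apply _ (measurableSet_singleton _)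

lemma disjoint_cyl {N m : ℕ} {u v : Fin m → Fin N} (h : u ≠ v) :
    Disjoint (_root_.cylinder u) (_root_.cylinder v) := by
  rw [Set.disjoint_left]
  intro x hu hv
  exact h (funext fun j => (hu j).symm.trans (hv j))

lemma wordProd_append {N m k : ℕ} (p : Fin N → ℝ) (u : Fin m → Fin N) (w : Fin k → Fin N) :
    wordProd p (Fin.append u w) = wordProd p u * wordProd p w := by
  simp [wordProd, Fin.prod_univ_add]

lemma cyl_append {N m k : ℕ} (u : Fin m → Fin N) (w : Fin k → Fin N) :
    _root_.cylinder (Fin.append u w) =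
      _root_.cylinder u ∩ {o | ∀ i : Fin k, o (m + i) = w i} := by
  ext o
  simp only [_root_.cylinder, mem_ofPred_eq, mem_inter_iff]
  constructor
  · intro h
    exact ⟨fun j => by simpa using h (Fin.castAdd k j), fun i => by simpa using h (Fin.natAdd m i)⟩
  · rintro ⟨h1, h2⟩ j
    refine Fin.addCases (fun j => ?_) (fun j => ?_) j
    · simpa using h1 j
    · simpa using h2 j

/-- A set determined by the first `L` symbols is a finite union of cylinders of length `L`. -/
lemma exists_cyl_decomp {N L : ℕ} (S : Set (ℕ → Fin N))
    (hS : ∀ o o' : ℕ → Fin N, (∀ j < L, o j = o' j) → o ∈ S → o' ∈ S) :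
    ∃ U : Finset (Fin L → Fin N), S = ⋃ u ∈ U, _root_.cylinder u := by
  classical
  refine ⟨Finset.univ.filter fun u => ∃ o ∈ S, ∀ j : Fin L, o j = u j, ?_⟩
  ext o
  simp only [mem_iUnion, Finset.mem_filter, Finset.mem_univ, true_and, exists_prop]
  constructor
  · intro h
    exact ⟨fun j => o j, ⟨o, h, fun _ => rfl⟩, fun _ => rfl⟩
  · rintro ⟨u, ⟨o', ho', hu⟩, ho⟩
    exact hS o' o (fun j hj => (hu ⟨j, hj⟩).trans (ho ⟨j, hj⟩).symm) ho'

section Blocks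

variable {N : ℕ} (p : Fin N → ℝ) (μ : Measure (ℕ → Fin N))

lemma wordProd_nonneg' (hp : ∀ i, 0 < p i) {m : ℕ} (w : Fin m → Fin N) : 0 ≤ wordProd p w :=
  Finset.prod_nonneg fun _ _ => (hp _).le

lemma measureReal_cyl (hp : ∀ i, 0 < p i)
    (hμ : ∀ (m : ℕ) (w : Fin m → Fin N),
      μ (_root_.cylinder w) = ENNReal.ofReal (wordProd p w)) {m : ℕ} (w : Fin m → Fin N) :
    μ.real (_root_.cylinder w) = wordProd p w := by
  rw [measureReal_def, hμ, ENNReal.toReal_ofReal (wordProd_nonneg' p hp w)]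

variable [IsProbabilityMeasure μ]

/-- An event determined by the first `L` symbols is independent of the block that starts at
position `L`. -/
lemma measureReal_inter_block (hp : ∀ i, 0 < p i)
    (hμ : ∀ (m : ℕ) (w : Fin m → Fin N),
      μ (_root_.cylinder w) = ENNReal.ofReal (wordProd p w))
    {L M : ℕ} (S : Set (ℕ → Fin N))
    (hS : ∀ o o' : ℕ → Fin N, (∀ j < L, o j = o' j) → o ∈ S → o' ∈ S) (w : Fin M → Fin N) :
    μ.real (S ∩ {o | ∀ i : Fin M, o (L + i) = w i}) = μ.real S * wordProd p w := by
  obtain ⟨U, rfl⟩ := exists_cyl_decomp S hS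
  have h1 : (⋃ u ∈ U, _root_.cylinder u) ∩ {o : ℕ → Fin N | ∀ i : Fin M, o (L + i) = w i}
      = ⋃ u ∈ U, _root_.cylinder (Fin.append u w) := by
    simp only [cyl_append, Set.iUnion_inter]
  rw [h1, measureReal_biUnion_finset, measureReal_biUnion_finset, Finset.sum_mul]
  · exact Finset.sum_congr rfl fun u _ => by
      rw [measureReal_cyl p μ hp hμ, measureReal_cyl p μ hp hμ, wordProd_append]
  · exact fun u _ v _ h => disjoint_cyl h
  · exact fun u _ => measurableSet_cyl u
  · intro u _ v _ h
    rw [Function.onFun, cyl_append, cyl_append]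
    exact (disjoint_cyl h).mono inter_subset_left inter_subset_left
  · exact fun u _ => measurableSet_cyl _

/-- The sequences in which none of the `T` consecutive blocks of length `M` starting at
position `k` equals `w`. -/
def avoidSet {M : ℕ} (k : ℕ) (w : Fin M → Fin N) (T : ℕ) : Set (ℕ → Fin N) :=
  {o | ∀ j < T, ¬ ∀ i : Fin M, o (k + j * M + i) = w i}

lemma measureReal_avoidSet (hp : ∀ i, 0 < p i)
    (hμ : ∀ (m : ℕ) (w : Fin m → Fin N),
      μ (_root_.cylinder w) = ENNReal.ofReal (wordProd p w))
    {M : ℕ} (k : ℕ) (w : Fin M → Fin N) (T : ℕ) :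
    μ.real (avoidSet k w T) = (1 - wordProd p w) ^ T := by
  induction T with
  | zero => simp [avoidSet]
  | succ T ih =>
    have hblock : MeasurableSet {o : ℕ → Fin N | ∀ i : Fin M, o (k + T * M + i) = w i} := by
      have : {o : ℕ → Fin N | ∀ i : Fin M, o (k + T * M + i) = w i}
          = ⋂ i : Fin M, (fun x : ℕ → Fin N => x (k + T * M + i)) ⁻¹' {w i} := by
        ext x; simp
      rw [this]
      exact MeasurableSet.iInter fun j => measurable_pi_apply _ (measurableSet_singleton _)
    have hS : ∀ o o' : ℕ → Fin N, (∀ j < k + T * M, o j = o' j) →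
        o ∈ avoidSet k w T → o' ∈ avoidSet k w T := by
      intro o o' h ho j hj hc
      refine ho j hj fun i => ?_
      rw [h _ ?_, hc i]
      have : (j + 1) * M ≤ T * M := Nat.mul_le_mul_right M hj
      have := i.2
      linarith
    have heq : avoidSet k w (T + 1) = avoidSet k w T \
        {o : ℕ → Fin N | ∀ i : Fin M, o (k + T * M + i) = w i} := by
      ext o
      simp only [avoidSet, mem_ofPred_eq, Set.mem_sdiff, Nat.forall_lt_succ_right]
    have hi := measureReal_inter_block p μ hp hμ (avoidSet k w T) hS w
    have hd := measureReal_inter_add_sdiff (μ := μ) (s := avoidSet k w T) hblock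
    rw [heq, pow_succ, ← ih]
    linarith

lemma measureReal_exists_avoid_le (hp : ∀ i, 0 < p i) (hpsum : ∑ i, p i = 1)
    (hμ : ∀ (m : ℕ) (w : Fin m → Fin N),
      μ (_root_.cylinder w) = ENNReal.ofReal (wordProd p w))
    (q : ℝ) (hq0 : 0 < q) (hq : ∀ i, q ≤ p i) (M k T : ℕ) :
    μ.real (⋃ w : Fin M → Fin N, avoidSet k w T) ≤ (q ^ M)⁻¹ * Real.exp (-(T * q ^ M)) := by
  have hNq : (N : ℝ) ≤ q⁻¹ := by
    rw [← one_div, le_div_iff₀ hq0, ← hpsum]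
    simpa using Finset.sum_le_sum fun i (_ : i ∈ Finset.univ) => hq i
  have hw : ∀ w : Fin M → Fin N, μ.real (avoidSet k w T) ≤ Real.exp (-(T * q ^ M)) := by
    intro w
    have h1 : q ^ M ≤ wordProd p w := by
      simpa [wordProd] using
        Finset.prod_le_prod (s := Finset.univ) (f := fun _ : Fin M => q) (g := fun j => p (w j))
          (fun _ _ => hq0.le) (fun j _ => hq (w j))
    have h2 : 0 ≤ 1 - wordProd p w := by
      rw [← measureReal_cyl p μ hp hμ w]
      linarith [measureReal_le_one (μ := μ) (s := _root_.cylinder w)]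
    have h3 : 1 - wordProd p w ≤ Real.exp (-(q ^ M)) := by
      linarith [Real.add_one_le_exp (-(q ^ M))]
    rw [measureReal_avoidSet p μ hp hμ]
    calc _ ≤ Real.exp (-(q ^ M)) ^ T := pow_le_pow_left₀ h2 h3 T
      _ = _ := by rw [← Real.exp_nat_mul]; ring_nf
  calc _ ≤ ∑ w : Fin M → Fin N, μ.real (avoidSet k w T) := measureReal_iUnion_fintype_le _
    _ ≤ ∑ _w : Fin M → Fin N, Real.exp (-(T * q ^ M)) := Finset.sum_le_sum fun w _ => hw w
    _ = (N : ℝ) ^ M * Real.exp (-(T * q ^ M)) := by simp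
    _ ≤ _ := by
      rw [← inv_pow]
      gcongr

end Blocks

/-! ### Asymptotics along a subsequence -/

/-- The positivity of `1 / α` excludes the case where the real-valued `liminf` takes its junk
value `0` because the sequence tends to infinity. -/
lemma frequently_lt_of_liminf_eq {u : ℕ → ℝ} {a b : ℝ} (ha : 0 < a)
    (h : liminf u atTop = a) (hab : a < b) : ∃ᶠ n in atTop, u n < b := by
  intro hc
  have hc' : ∀ᶠ n in atTop, b ≤ u n := hc.mono fun n hn => not_lt.1 hn
  rw [liminf_eq] at h
  by_cases hb : BddAbove {a | ∀ᶠ n in atTop, a ≤ u n}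
  · have := le_csSup hb hc'
    linarith
  · rw [Real.sSup_of_not_bddAbove hb] at h
    linarith

lemma tendsto_error_bound {θ : ℝ} (hθ : θ < 1) :
    Tendsto (fun n : ℕ => (n : ℝ) ^ θ * Real.exp (1 - (n : ℝ) ^ ((1 - θ) / 2))) atTop (nhds 0) := by
  set δ := (1 - θ) / 2 with hδ
  have hδ0 : 0 < δ := by rw [hδ]; linarith
  have h1 := tendsto_rpow_mul_exp_neg_mul_atTop_nhds_zero (θ / δ) 1 one_pos
  have h2 : Tendsto (fun n : ℕ => (n : ℝ) ^ δ) atTop atTop :=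
    (tendsto_rpow_atTop hδ0).comp tendsto_natCast_atTop_atTop
  have h3 := (h1.comp h2).mul_const (Real.exp 1)
  rw [zero_mul] at h3
  refine h3.congr fun n => ?_
  simp only [Function.comp]
  rw [← Real.rpow_mul (Nat.cast_nonneg n), mul_div_cancel₀ _ hδ0.ne', mul_assoc, ← Real.exp_add]
  ring_nf

lemma eventually_blocks_fit (k : ℕ) {θ β : ℝ} (hθ : θ < 1) :
    ∀ᶠ n : ℕ in atTop, (k : ℝ) + (n : ℝ) ^ ((1 + θ) / 2) * (β * Real.log n) ≤ n := by
  have hδ0 : 0 < (1 - θ) / 2 := by linarith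
  have h1 : (fun x : ℝ => (k : ℝ)) =o[atTop] (fun x : ℝ => x) :=
    Asymptotics.isLittleO_const_id_atTop _
  have h2 : (fun x : ℝ => x ^ ((1 + θ) / 2) * (β * Real.log x)) =o[atTop] (fun x : ℝ => x) := by
    have h3 := (isLittleO_log_rpow_atTop hδ0).const_mul_left β
    have h4 := (Asymptotics.isBigO_refl (fun x : ℝ => x ^ ((1 + θ) / 2)) atTop).mul_isLittleO h3
    refine h4.congr' EventuallyEq.rfl ?_
    filter_upwards [eventually_gt_atTop 0] with x hx
    rw [← Real.rpow_add hx]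
    have : (1 + θ) / 2 + (1 - θ) / 2 = 1 := by ring
    rw [this, Real.rpow_one]
  have h5 := ((h1.add h2).bound one_pos)
  filter_upwards [tendsto_natCast_atTop_atTop.eventually h5] with n hn
  have := (le_abs_self _).trans hn
  simpa using this

/-! ### Every symbolic sequence is covered -/

lemma ae_limsupCylinders_eq_univ {N : ℕ} [NeZero N] (hN : 2 ≤ N) (p : Fin N → ℝ)
    (hp : ∀ i, 0 < p i) (hpsum : ∑ i, p i = 1)
    (μ : Measure (ℕ → Fin N)) [IsProbabilityMeasure μ]
    (hμ : ∀ (m : ℕ) (w : Fin m → Fin N),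
      μ (_root_.cylinder w) = ENNReal.ofReal (wordProd p w))
    (α : ℝ) (hα : 0 < α) (ℓ : ℕ → ℕ) (hℓmono : Monotone ℓ)
    (hℓ : liminf (fun n : ℕ => (ℓ n : ℝ) / Real.log n) atTop = 1 / α)
    (hα2 : -Real.log (⨅ i, p i) < α) :
    ∀ᵐ o ∂μ, limsupCylinders ℓ o = univ := by
  set q := ⨅ i, p i with hqdef
  have hq : ∀ i, q ≤ p i := fun i => ciInf_le (Finite.bddBelow_range p) i
  have hq0 : 0 < q := by
    obtain ⟨i, hi⟩ := exists_eq_ciInf_of_finite (f := p)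
    rw [hqdef, ← hi]; exact hp i
  have hq1 : q < 1 := by
    have h1 : (N : ℝ) * q ≤ 1 := by
      rw [← hpsum]
      simpa using Finset.sum_le_sum fun i (_ : i ∈ Finset.univ) => hq i
    have : (2 : ℝ) ≤ N := by exact_mod_cast hN
    nlinarith
  set c := -Real.log q with hc
  have hc0 : 0 < c := by rw [hc]; linarith [Real.log_neg hq0 hq1]
  obtain ⟨β, hβ1, hβ2⟩ := exists_between (one_div_lt_one_div_of_lt hc0 hα2)
  have hfreq := frequently_lt_of_liminf_eq (one_div_pos.2 hα) hℓ hβ1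
  set θ := c * β with hθ
  have hθ1 : θ < 1 := by
    rw [lt_div_iff₀ hc0] at hβ2
    rw [hθ, mul_comm]; exact hβ2
  -- The exceptional set for tail index `k` is contained, for every good `n`, in the event that
  -- some word of length `ℓ n` is missed between the positions `k` and `n`.
  have hnull : ∀ k : ℕ,
      μ.real {o : ℕ → Fin N | ¬ ∀ x : ℕ → Fin N, ∃ n, k ≤ n ∧ ∀ j : Fin (ℓ n), x j = o (n + j)} = 0 := by
    intro k
    refine le_antisymm (le_of_forall_pos_le_add fun ε hε => ?_) measureReal_nonneg
    obtain ⟨n, hlt, hfit, herr, hn⟩ := (hfreq.and_eventually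
      ((eventually_blocks_fit k (β := β) hθ1).and
        (((tendsto_error_bound hθ1).eventually (gt_mem_nhds hε)).and
          (eventually_ge_atTop 2)))).exists
    have hn2 : (2 : ℝ) ≤ n := by exact_mod_cast hn
    have hn0 : (0 : ℝ) < n := by linarith
    have hlog : 0 < Real.log n := Real.log_pos (by linarith)
    have hM : (ℓ n : ℝ) < β * Real.log n := (div_lt_iff₀ hlog).1 hlt
    set T := ⌊(n : ℝ) ^ ((1 + θ) / 2)⌋₊ with hT
    have hpow0 : 0 ≤ (n : ℝ) ^ ((1 + θ) / 2) := Real.rpow_nonneg hn0.le _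
    have hTle : (T : ℝ) ≤ (n : ℝ) ^ ((1 + θ) / 2) := Nat.floor_le hpow0
    have hTge : (n : ℝ) ^ ((1 + θ) / 2) < T + 1 := Nat.lt_floor_add_one _
    have hpos : k + T * ℓ n ≤ n := by
      have : (k : ℝ) + T * ℓ n ≤ n := by
        refine le_trans ?_ hfit
        gcongr
      exact_mod_cast this
    have hqM : (n : ℝ) ^ (-θ) ≤ q ^ ℓ n := by
      rw [← Real.rpow_natCast, Real.rpow_def_of_pos hn0, Real.rpow_def_of_pos hq0,
        Real.exp_le_exp]
      have : Real.log q = -c := by rw [hc, neg_neg]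
      rw [this, hθ]
      nlinarith
    have hnθ : 0 < (n : ℝ) ^ (-θ) := Real.rpow_pos_of_pos hn0 _
    have hsub : {o : ℕ → Fin N | ¬ ∀ x : ℕ → Fin N, ∃ n, k ≤ n ∧ ∀ j : Fin (ℓ n), x j = o (n + j)} ⊆
        ⋃ w : Fin (ℓ n) → Fin N, avoidSet k w T := by
      intro o ho
      simp only [mem_ofPred_eq, not_forall] at ho
      obtain ⟨x, hx⟩ := ho
      refine mem_iUnion.2 ⟨fun j => x j, fun j hj hcon => hx ⟨k + j * ℓ n, by omega, ?_⟩⟩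
      have hjn : k + j * ℓ n ≤ n :=
        le_trans (Nat.add_le_add_left (Nat.mul_le_mul_right _ hj.le) k) hpos
      intro i
      exact (hcon ⟨i, i.2.trans_le (hℓmono hjn)⟩).symm
    have hexp : 1 - (n : ℝ) ^ ((1 - θ) / 2) ≥ -(T * q ^ ℓ n) := by
      have h1 : (n : ℝ) ^ ((1 - θ) / 2) = (n : ℝ) ^ ((1 + θ) / 2) * (n : ℝ) ^ (-θ) := by
        rw [← Real.rpow_add hn0]; ring_nf
      have h2 : q ^ ℓ n ≤ 1 := pow_le_one₀ hq0.le hq1.le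
      have h3 : (n : ℝ) ^ ((1 + θ) / 2) * (n : ℝ) ^ (-θ) ≤ (T + 1) * q ^ ℓ n := by gcongr
      rw [h1]
      linarith
    rw [zero_add]
    calc _ ≤ μ.real (⋃ w : Fin (ℓ n) → Fin N, avoidSet k w T) := measureReal_mono hsub
      _ ≤ (q ^ ℓ n)⁻¹ * Real.exp (-(T * q ^ ℓ n)) :=
        measureReal_exists_avoid_le p μ hp hpsum hμ q hq0 hq _ _ _
      _ ≤ ((n : ℝ) ^ (-θ))⁻¹ * Real.exp (1 - (n : ℝ) ^ ((1 - θ) / 2)) := by gcongr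
      _ = (n : ℝ) ^ θ * Real.exp (1 - (n : ℝ) ^ ((1 - θ) / 2)) := by
        rw [Real.rpow_neg hn0.le, inv_inv]
      _ ≤ ε := herr.le
  have hall : ∀ᵐ o ∂μ, ∀ k : ℕ, ∀ x : ℕ → Fin N, ∃ n, k ≤ n ∧ ∀ j : Fin (ℓ n), x j = o (n + j) := by
    rw [ae_all_iff]
    intro k
    exact (measureReal_eq_zero_iff).1 (hnull k)
  filter_upwards [hall] with o ho
  refine eq_univ_of_forall fun x => ?_
  simp only [limsupCylinders, mem_iInter, mem_iUnion, _root_.cylinder, mem_ofPred_eq, exists_prop]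
  exact fun k => ho k x

/-- If `α > −log p_min`, then almost surely the dynamical covering set is all
of the attractor `Λ`. -/
theorem coverSet_eq_attractor {N d : ℕ} [NeZero N] (hN : 2 ≤ N)
    (lam p : Fin N → ℝ)
    (hlam : ∀ i, lam i ∈ Set.Ioo (0 : ℝ) 1)
    (hp : ∀ i, 0 < p i) (hpsum : ∑ i, p i = 1)
    (f : Fin N → EuclideanSpace ℝ (Fin d) → EuclideanSpace ℝ (Fin d))
    (hf : ∀ i x y, dist (f i x) (f i y) = lam i * dist x y)
    (Λ : Set (EuclideanSpace ℝ (Fin d)))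
    (hΛne : Λ.Nonempty) (hΛc : IsCompact Λ) (hΛ : Λ = ⋃ i, f i '' Λ)
    (π : (ℕ → Fin N) → EuclideanSpace ℝ (Fin d))
    (hπ : ∀ x, Filter.Tendsto (fun n => prefixMap f x n 0) Filter.atTop (nhds (π x)))
    (μ : Measure (ℕ → Fin N)) [IsProbabilityMeasure μ]
    (hμ : ∀ (m : ℕ) (w : Fin m → Fin N), μ (cylinder w) = ENNReal.ofReal (wordProd p w))
    (α : ℝ) (hα : 0 < α)
    (ℓ : ℕ → ℕ) (hℓmono : Monotone ℓ)
    (hℓ : Filter.liminf (fun n : ℕ => (ℓ n : ℝ) / Real.log n) Filter.atTop = 1 / α)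
    (hα2 : -Real.log (⨅ i, p i) < α) :
    ∀ᵐ o ∂μ, π '' limsupCylinders ℓ o = Λ := by
  filter_upwards [ae_limsupCylinders_eq_univ hN p hp hpsum μ hμ α hα ℓ hℓmono hℓ hα2] with o ho
  rw [ho, image_univ]
  exact range_coding_eq lam hlam f hf Λ hΛne hΛc hΛ π hπ
end
end
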